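/- arXiv:1511.06099 — 3 statements merged into one kernel-verified Lean document; each statement's English description precedes it below -/
import Mathlib

section
/- There is an absolute constant c > 0 such that the following holds for every integer n ≥ 2 and every real ε with 1/√n < ε < 1. Suppose (R, ρ, ske, est) is a randomized sketching scheme of size m bits for simple unweighted graphs on vertex set {1,...,n} such that for every such graph G, with probability at least 3/4 over a seed r drawn from ρ, simultaneously for every subset S ⊆ {1,...,n} the value est(S, ske(G,r), r) lies in the interval [(1−ε)·|∂_G(S,S̄)|, (1+ε)·|∂_G(S,S̄)|]. Then m ≥ c·n/ε². -/
open scoped Classical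

/-- Number of edges of `G` with exactly one endpoint in `S` (each crossing edge
counted once, as the ordered pair with first coordinate in `S`). -/
noncomputable def cutSize {n : ℕ} (G : SimpleGraph (Fin n)) (S : Finset (Fin n)) : ℕ :=
  (Finset.univ.filter (fun p : Fin n × Fin n => p.1 ∈ S ∧ p.2 ∉ S ∧ G.Adj p.1 p.2)).card

/-!
Partition most of the vertex set into `b ≈ n / 2k` blocks, each a pair of sides of size
`k ≈ 1 / (500 ε²)`, and put an arbitrary bipartite graph inside every block. By the Khintchine
inequality, two bipartite graphs on a block which differ in a quarter of the `k²` possible edges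
have some cut on which their values differ by order `k √k`; since cut values are at most `k²`, this
exceeds the error `ε k²` that a sketch may make. Hence, for a fixed seed, the graphs which are
correctly decoded from one and the same sketch are, block by block, within Hamming distance
`k² / 4` of one another, so that only an exponentially small fraction of the `2 ^ (k² b)` graphs can
share it. Averaging over the seed gives `m ≳ k² b ≈ n / ε²`. The rounding losses are absorbed by the
case `k = 1`, where a sketch has to recover the `b` edges exactly.
-/

open Finset
open scoped symmDiff

namespace CutSketch

section Rademacher

variable {α β : Type*}

/-- The `±1` vector of a set `T`: `1` on `T` and `-1` off `T`. -/
noncomputable def signVec (T : Finset α) (j : α) : ℝ := if j ∈ T then 1 else -1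

/-- The sum of `d` over `s` with the signs of `T`; with `T` uniform among the subsets of `s`
this is the Rademacher sum of `d`. -/
noncomputable def signedSum (d : α → ℝ) (s T : Finset α) : ℝ := ∑ j ∈ s, d j * signVec T j

lemma signedSum_insert_of_subset {d : α → ℝ} {s T : Finset α} {a : α} (ha : a ∉ s) (hT : T ⊆ s) :
    signedSum d (insert a s) T = signedSum d s T - d a := by
  have haT : a ∉ T := fun h => ha (hT h)
  simp only [signedSum, sum_insert ha, signVec, haT, if_false]
  ring

lemma signedSum_insert_insert {d : α → ℝ} {s : Finset α} (T : Finset α) {a : α} (ha : a ∉ s) :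
    signedSum d (insert a s) (insert a T) = signedSum d s T + d a := by
  have hsigns : ∀ j ∈ s, d j * signVec (insert a T) j = d j * signVec T j := by
    intro j hj
    simp [signVec, ne_of_mem_of_not_mem hj ha]
  rw [signedSum, sum_insert ha, sum_congr rfl hsigns, signedSum]
  simp [signVec, add_comm]

lemma sum_powerset_insert_signedSum (F : ℝ → ℝ) (d : α → ℝ) {s : Finset α} {a : α} (ha : a ∉ s) :
    ∑ T ∈ (insert a s).powerset, F (signedSum d (insert a s) T) =
      ∑ T ∈ s.powerset, (F (signedSum d s T - d a) + F (signedSum d s T + d a)) := by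
  rw [sum_powerset_insert ha, sum_add_distrib]
  congr 1
  · refine sum_congr rfl fun T hT => ?_
    rw [signedSum_insert_of_subset ha (mem_powerset.mp hT)]
  · simp only [signedSum_insert_insert _ ha]

lemma sum_signedSum_sq (d : α → ℝ) (s : Finset α) :
    ∑ T ∈ s.powerset, signedSum d s T ^ 2 = 2 ^ #s * ∑ j ∈ s, d j ^ 2 := by
  induction s using Finset.induction_on with
  | empty => simp [signedSum]
  | insert a s ha ih =>
    have parallelogram : ∀ x : ℝ, (x - d a) ^ 2 + (x + d a) ^ 2 = 2 * x ^ 2 + 2 * d a ^ 2 :=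
      fun x => by ring
    simp only [sum_powerset_insert_signedSum (· ^ 2) d ha, parallelogram, sum_add_distrib,
      ← mul_sum, ih, sum_const, card_powerset, nsmul_eq_mul, card_insert_of_notMem ha,
      sum_insert ha]
    push_cast
    ring

lemma sum_signedSum_pow_four_le (d : α → ℝ) (s : Finset α) :
    ∑ T ∈ s.powerset, signedSum d s T ^ 4 ≤ 2 ^ #s * (3 * (∑ j ∈ s, d j ^ 2) ^ 2) := by
  induction s using Finset.induction_on with
  | empty => simp [signedSum]
  | insert a s ha ih =>
    have expand : ∀ x : ℝ, (x - d a) ^ 4 + (x + d a) ^ 4 =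
        2 * x ^ 4 + 12 * d a ^ 2 * x ^ 2 + 2 * d a ^ 4 := fun x => by ring
    simp only [sum_powerset_insert_signedSum (· ^ 4) d ha, expand, sum_add_distrib, ← mul_sum,
      sum_signedSum_sq, sum_const, card_powerset, nsmul_eq_mul, card_insert_of_notMem ha,
      sum_insert ha, pow_succ (2 : ℝ) #s]
    push_cast
    have : (0 : ℝ) ≤ 2 ^ #s * d a ^ 4 := by positivity
    linarith

lemma three_sq_mul_sq_sub_pow_four_le {s : ℝ} (hs : 0 ≤ s) (t : ℝ) :
    3 * s ^ 2 * t ^ 2 - t ^ 4 ≤ 2 * s ^ 3 * |t| := by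
  have factored : 0 ≤ |t| * ((|t| - s) ^ 2 * (|t| + 2 * s)) := by positivity
  rw [← sq_abs t, ← Even.pow_abs (by decide : Even 4) t]
  linarith

/-- Khintchine's inequality, obtained by averaging the preceding pointwise bound at twice the
standard deviation `σ`, where the second moment outweighs the fourth. -/
theorem sqrt_sum_sq_le_sum_abs_signedSum (d : α → ℝ) (s : Finset α) :
    2 ^ #s * (√(∑ j ∈ s, d j ^ 2) / 2) ≤ ∑ T ∈ s.powerset, |signedSum d s T| := by
  set σ := √(∑ j ∈ s, d j ^ 2)
  have hσ_sq : ∑ j ∈ s, d j ^ 2 = σ ^ 2 := (Real.sq_sqrt (by positivity)).symm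
  have hσ_nonneg : 0 ≤ σ := Real.sqrt_nonneg _
  rcases hσ_nonneg.eq_or_lt with hσ0 | hσ0
  · rw [← hσ0, zero_div, mul_zero]
    positivity
  have hσ3 : 0 < 2 * (2 * σ) ^ 3 := by positivity
  refine le_of_mul_le_mul_left ?_ hσ3
  calc 2 * (2 * σ) ^ 3 * (2 ^ #s * (σ / 2))
      ≤ 3 * (2 * σ) ^ 2 * (2 ^ #s * σ ^ 2) - 2 ^ #s * (3 * (σ ^ 2) ^ 2) := by
        have : (0 : ℝ) ≤ 2 ^ #s * σ ^ 4 := by positivity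
        linarith
    _ ≤ 3 * (2 * σ) ^ 2 * ∑ T ∈ s.powerset, signedSum d s T ^ 2
          - ∑ T ∈ s.powerset, signedSum d s T ^ 4 := by
        rw [sum_signedSum_sq, ← hσ_sq]
        gcongr
        exact sum_signedSum_pow_four_le d s
    _ = ∑ T ∈ s.powerset, (3 * (2 * σ) ^ 2 * signedSum d s T ^ 2 - signedSum d s T ^ 4) := by
        rw [sum_sub_distrib, mul_sum]
    _ ≤ ∑ T ∈ s.powerset, 2 * (2 * σ) ^ 3 * |signedSum d s T| :=
        sum_le_sum fun T _ => three_sq_mul_sq_sub_pow_four_le (by positivity) _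
    _ = 2 * (2 * σ) ^ 3 * ∑ T ∈ s.powerset, |signedSum d s T| := by rw [mul_sum]

lemma exists_sum_signVec_mul_eq_sum_abs [Fintype α] (x : α → ℝ) :
    ∃ X : Finset α, ∑ i, signVec X i * x i = ∑ i, |x i| := by
  refine ⟨({i | 0 ≤ x i} : Finset α), sum_congr rfl fun i _ => ?_⟩
  rcases le_or_gt 0 (x i) with h | h
  · simp [signVec, h, abs_of_nonneg]
  · simp [signVec, h.not_ge, abs_of_neg h]

/-- Littlewood's mixed `(ℓ¹, ℓ²)` inequality. -/
theorem exists_sum_sqrt_le_bilinear_signVec [Fintype α] [Fintype β] (D : α → β → ℝ) :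
    ∃ (X : Finset α) (Y : Finset β),
      ∑ i, √(∑ j, D i j ^ 2) / 2 ≤ ∑ i, ∑ j, D i j * (signVec X i * signVec Y j) := by
  have average : ∑ _Y ∈ (univ : Finset β).powerset, ∑ i, √(∑ j, D i j ^ 2) / 2 ≤
      ∑ Y ∈ (univ : Finset β).powerset, ∑ i, |signedSum (D i) univ Y| := by
    rw [sum_comm, sum_comm (s := univ.powerset)]
    refine sum_le_sum fun i _ => ?_
    simpa using sqrt_sum_sq_le_sum_abs_signedSum (D i) univ
  obtain ⟨Y, -, hY⟩ := exists_le_of_sum_le (powerset_nonempty _) average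
  obtain ⟨X, hX⟩ := exists_sum_signVec_mul_eq_sum_abs fun i => signedSum (D i) univ Y
  refine ⟨X, Y, hY.trans_eq ?_⟩
  rw [← hX]
  simp only [signedSum, mul_sum, mul_left_comm]

end Rademacher

section Confusable

variable {Q R M ι : Type*} {ε p : ℝ}

/-- `g` approximates `f` with relative error `ε` at every query. -/
def IsRelApprox (ε : ℝ) (f g : Q → ℝ) : Prop :=
  ∀ q, (1 - ε) * f q ≤ g q ∧ g q ≤ (1 + ε) * f q

/-- The condition which two functions satisfy when a single function approximates both of them
with relative error `ε`. -/
def Confusable (ε : ℝ) (f g : Q → ℝ) : Prop :=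
  ∀ q, |f q - g q| ≤ ε * (f q + g q)

/-- The for-all guarantee of a randomized sketch: for each input `x`, with probability at least
`p` over the seed, the estimates read off the sketch of `x` have relative error `ε` at all queries
simultaneously. The true answers are given by `val`. -/
def IsForAllSketch [Fintype R] (ε p : ℝ) (ρ : R → ℝ) (val : ι → Q → ℝ) (ske : ι → R → M)
    (est : Q → M → R → ℝ) : Prop :=
  ∀ x, p ≤ ∑ r with IsRelApprox ε (val x) (fun q => est q (ske x r) r), ρ r

lemma IsRelApprox.confusable {f g h : Q → ℝ} (hf : IsRelApprox ε f h) (hg : IsRelApprox ε g h) :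
    Confusable ε f g := fun q =>
  abs_le.mpr ⟨by linarith [(hf q).2, (hg q).1], by linarith [(hf q).1, (hg q).2]⟩

lemma Confusable.symm {f g : Q → ℝ} (h : Confusable ε f g) : Confusable ε g f := fun q => by
  rw [abs_sub_comm, add_comm]
  exact h q

variable [Fintype ι] [Fintype M] {val : ι → Q → ℝ} {K : ℕ}

lemma card_isRelApprox_decode_le
    (hK : ∀ J : Finset ι, (∀ i ∈ J, ∀ j ∈ J, Confusable ε (val i) (val j)) → #J ≤ K)
    (encode : ι → M) (decode : M → Q → ℝ) :
    #{i | IsRelApprox ε (val i) (decode (encode i))} ≤ K * Fintype.card M := by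
  refine card_le_mul_card_image_of_maps_to (f := encode) (fun _ _ => mem_univ _) K fun c _ => ?_
  refine hK _ fun i hi j hj => ?_
  simp only [mem_filter, mem_univ, true_and] at hi hj
  exact (hi.2 ▸ hi.1).confusable (hj.2 ▸ hj.1)

theorem IsForAllSketch.mul_card_le [Fintype R] {ρ : R → ℝ} {ske : ι → R → M}
    {est : Q → M → R → ℝ} (h : IsForAllSketch ε p ρ val ske est) (hρ : ∀ r, 0 ≤ ρ r)
    (hρ_sum : ∑ r, ρ r = 1)
    (hK : ∀ J : Finset ι, (∀ i ∈ J, ∀ j ∈ J, Confusable ε (val i) (val j)) → #J ≤ K) :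
    p * Fintype.card ι ≤ K * Fintype.card M := by
  calc p * Fintype.card ι
      = ∑ _i : ι, p := by simp [mul_comm]
    _ ≤ ∑ i, ∑ r with IsRelApprox ε (val i) (fun q => est q (ske i r) r), ρ r :=
        sum_le_sum fun i _ => h i
    _ = ∑ r, #{i | IsRelApprox ε (val i) (fun q => est q (ske i r) r)} * ρ r := by
        simp only [sum_filter]
        rw [sum_comm]
        simp only [← sum_filter, sum_const, nsmul_eq_mul]
    _ ≤ ∑ r, (K * Fintype.card M : ℕ) * ρ r := by
        gcongr with r
        · exact hρ r
        · exact card_isRelApprox_decode_le hK (ske · r) fun c q => est q c r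
    _ = K * Fintype.card M := by rw [← mul_sum, hρ_sum, mul_one, Nat.cast_mul]

end Confusable

section Hamming

/-- The subsets of `β` of size less than a quarter of `β`: the Hamming ball around the empty set. -/
noncomputable def lightSets (β : Type*) [Fintype β] : Finset (Finset β) :=
  {T | 4 * #T < Fintype.card β}

variable {β : Type*}

lemma card_lightSets_mul_two_pow_le [Fintype β] :
    #(lightSets β) * 2 ^ (Fintype.card β - Fintype.card β / 4) ≤ 3 ^ Fintype.card β := by
  calc #(lightSets β) * 2 ^ (Fintype.card β - Fintype.card β / 4)
      ≤ ∑ T ∈ lightSets β, 2 ^ (Fintype.card β - #T) := by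
        rw [← smul_eq_mul]
        refine card_nsmul_le_sum _ _ _ fun T hT => Nat.pow_le_pow_right two_pos ?_
        simp only [lightSets, mem_filter, mem_univ, true_and] at hT
        lia
    _ ≤ ∑ T : Finset β, 2 ^ (Fintype.card β - #T) :=
        sum_le_sum_of_subset (subset_univ _)
    _ = 3 ^ Fintype.card β := by
        simpa using Fintype.sum_pow_mul_eq_add_pow β (1 : ℕ) 2

lemma card_lightSets_pow_eight_mul_le [Fintype β] :
    #(lightSets β) ^ 8 * 2 ^ Fintype.card β ≤ 2 ^ (8 * Fintype.card β) := by
  set N := Fintype.card β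
  set W := #(lightSets β)
  have h64 : W ^ 8 * 64 ^ N ≤ 6561 ^ N := by
    calc W ^ 8 * 64 ^ N = W ^ 8 * 2 ^ (6 * N) := by rw [pow_mul]; norm_num
      _ ≤ W ^ 8 * 2 ^ ((N - N / 4) * 8) := by gcongr ?_ * 2 ^ ?_ <;> lia
      _ = (W * 2 ^ (N - N / 4)) ^ 8 := by rw [mul_pow, ← pow_mul]
      _ ≤ (3 ^ N) ^ 8 := by gcongr; exact card_lightSets_mul_two_pow_le
      _ = 6561 ^ N := by rw [pow_right_comm]; norm_num
  refine Nat.le_of_mul_le_mul_right ?_ (pow_pos (show 0 < 64 by decide) N)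
  calc W ^ 8 * 2 ^ N * 64 ^ N = W ^ 8 * 64 ^ N * 2 ^ N := by ring
    _ ≤ 6561 ^ N * 2 ^ N := by gcongr
    _ = 13122 ^ N := by rw [← mul_pow]; norm_num
    _ ≤ 16384 ^ N := by gcongr; decide
    _ = 2 ^ (8 * N) * 64 ^ N := by rw [pow_mul, ← mul_pow]; norm_num

lemma card_le_card_pow_of_symmDiff_mem [DecidableEq β] {τ : Type*} [Fintype τ]
    (W : Finset (Finset β)) {J : Finset (τ → Finset β)}
    (hJ : ∀ f ∈ J, ∀ g ∈ J, ∀ t, f t ∆ g t ∈ W) : #J ≤ #W ^ Fintype.card τ := by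
  rcases J.eq_empty_or_nonempty with rfl | ⟨f, hf⟩
  · simp
  rw [← card_univ, ← prod_const, ← Fintype.card_piFinset]
  refine card_le_card_of_injOn (fun g t => f t ∆ g t)
    (fun g hg => Fintype.mem_piFinset.mpr (hJ f hf g hg)) fun g _ g' _ h => funext fun t => ?_
  exact symmDiff_right_injective (f t) (congrFun h t)

end Hamming

section BipartiteCut

variable {α β : Type*}

/-- The number of edges cut by `X ∪ Y` in the bipartite graph on the disjoint union of `α` and `β`
with edge set `A`, where `X` lies on the side `α` and `Y` on the side `β`. -/
noncomputable def bipartiteCut (A : Finset (α × β)) (X : Finset α) (Y : Finset β) : ℕ :=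
  #{e ∈ A | ¬(e.1 ∈ X ↔ e.2 ∈ Y)}

/-- The bipartite cuts as a real-valued function of the query `(X, Y)`. -/
noncomputable def bipartiteCutValue (A : Finset (α × β)) (q : Finset α × Finset β) : ℝ :=
  bipartiteCut A q.1 q.2

variable {ε : ℝ} {A B : Finset (α × β)}

lemma bipartiteCut_image_fst_empty (A : Finset (α × β)) :
    bipartiteCut A (A.image Prod.fst) ∅ = #A := by
  rw [bipartiteCut, filter_true_of_mem]
  intro e he
  simp [mem_image_of_mem Prod.fst he]

lemma Confusable.eq_empty (hε : ε < 1)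
    (h : Confusable ε (bipartiteCutValue A) (bipartiteCutValue ∅)) : A = ∅ := by
  have hcard : (#A : ℝ) ≤ ε * #A := by
    have hcut := h (A.image Prod.fst, ∅)
    rwa [bipartiteCutValue, bipartiteCutValue, bipartiteCut_image_fst_empty, bipartiteCut,
      filter_empty, card_empty, Nat.cast_zero, sub_zero, add_zero, Nat.abs_cast] at hcut
  by_contra hA
  have : (0 : ℝ) < #A := mod_cast card_pos.mpr (nonempty_iff_ne_empty.mpr hA)
  nlinarith

lemma Confusable.eq_of_subsingleton [Subsingleton (α × β)] (hε : ε < 1)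
    (h : Confusable ε (bipartiteCutValue A) (bipartiteCutValue B)) : A = B := by
  rcases A.eq_empty_or_nonempty with rfl | hA
  · exact (h.symm.eq_empty hε).symm
  rcases B.eq_empty_or_nonempty with rfl | hB
  · exact h.eq_empty hε
  exact Finset.coe_injective (hA.to_set.eq_univ.trans hB.to_set.eq_univ.symm)

lemma bipartiteCut_add_compl [Fintype α] (A : Finset (α × β)) (X : Finset α) (Y : Finset β) :
    bipartiteCut A X Y + bipartiteCut A Xᶜ Y = #A := by
  rw [← card_filter_add_card_filter_not (s := A) fun e => ¬(e.1 ∈ X ↔ e.2 ∈ Y)]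
  simp only [bipartiteCut, mem_compl]
  congr 3
  ext e
  tauto

lemma bipartiteCut_compl_sub [Fintype α] (A : Finset (α × β)) (X : Finset α) (Y : Finset β) :
    (bipartiteCut A Xᶜ Y : ℝ) - bipartiteCut A X Y =
      ∑ e ∈ A, signVec X e.1 * signVec Y e.2 := by
  simp only [bipartiteCut, card_filter, Nat.cast_sum, ← sum_sub_distrib]
  refine sum_congr rfl fun e _ => ?_
  by_cases hX : e.1 ∈ X <;> by_cases hY : e.2 ∈ Y <;> simp [signVec, hX, hY]

lemma Confusable.sum_signVec_sub_le [Finite α]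
    (h : Confusable ε (bipartiteCutValue A) (bipartiteCutValue B))
    (X : Finset α) (Y : Finset β) :
    ∑ e ∈ A, signVec X e.1 * signVec Y e.2 - ∑ e ∈ B, signVec X e.1 * signVec Y e.2 ≤
      ε * (#A + #B) := by
  have := Fintype.ofFinite α
  have hX := (abs_le.mp (h (X, Y))).1
  have hXc := (abs_le.mp (h (Xᶜ, Y))).2
  simp only [bipartiteCutValue] at hX hXc
  rw [← bipartiteCut_compl_sub, ← bipartiteCut_compl_sub, ← bipartiteCut_add_compl A X Y,
    ← bipartiteCut_add_compl B X Y]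
  push_cast
  linarith

lemma exists_card_symmDiff_le_sum_signVec_sub [Finite α] [Fintype β] (A B : Finset (α × β)) :
    ∃ (X : Finset α) (Y : Finset β), (#(A ∆ B) : ℝ) ≤ 2 * √(Fintype.card β) *
      (∑ e ∈ A, signVec X e.1 * signVec Y e.2 - ∑ e ∈ B, signVec X e.1 * signVec Y e.2) := by
  have := Fintype.ofFinite α
  let D : α → β → ℝ := fun i j => (if (i, j) ∈ A then 1 else 0) - (if (i, j) ∈ B then 1 else 0)
  have hD_sq : ∀ i j, D i j ^ 2 = if (i, j) ∈ A ∆ B then 1 else 0 := by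
    intro i j
    by_cases hA : (i, j) ∈ A <;> by_cases hB : (i, j) ∈ B <;> simp [D, mem_symmDiff, hA, hB]
  have hrow : ∀ i, ∑ j, D i j ^ 2 ≤ √(Fintype.card β) * √(∑ j, D i j ^ 2) := by
    intro i
    have hcard : ∑ j, D i j ^ 2 ≤ Fintype.card β := by
      rw [← nsmul_one, ← card_univ, ← sum_const]
      refine sum_le_sum fun j _ => ?_
      rw [hD_sq]
      split_ifs <;> norm_num
    calc ∑ j, D i j ^ 2 = √(∑ j, D i j ^ 2) * √(∑ j, D i j ^ 2) :=
          (Real.mul_self_sqrt (by positivity)).symm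
      _ ≤ √(Fintype.card β) * √(∑ j, D i j ^ 2) := by gcongr
  obtain ⟨X, Y, hXY⟩ := exists_sum_sqrt_le_bilinear_signVec D
  refine ⟨X, Y, ?_⟩
  calc (#(A ∆ B) : ℝ) = ∑ i, ∑ j, D i j ^ 2 := by
        simp only [hD_sq]
        rw [← Fintype.sum_prod_type', sum_boole]
        simp
    _ ≤ ∑ i, √(Fintype.card β) * √(∑ j, D i j ^ 2) := sum_le_sum fun i _ => hrow i
    _ = 2 * √(Fintype.card β) * ∑ i, √(∑ j, D i j ^ 2) / 2 := by
        rw [← mul_sum, ← sum_div]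
        ring
    _ ≤ 2 * √(Fintype.card β) * ∑ i, ∑ j, D i j * (signVec X i * signVec Y j) := by gcongr
    _ = _ := by
        rw [← Fintype.sum_prod_type']
        simp [D, sub_mul, sum_sub_distrib]

variable [Fintype α] [Fintype β]

theorem Confusable.card_symmDiff_le (hε : 0 ≤ ε)
    (h : Confusable ε (bipartiteCutValue A) (bipartiteCutValue B)) :
    (#(A ∆ B) : ℝ) ≤ 4 * ε * √(Fintype.card β) * Fintype.card (α × β) := by
  obtain ⟨X, Y, hXY⟩ := exists_card_symmDiff_le_sum_signVec_sub A B
  have hA : (#A : ℝ) ≤ Fintype.card (α × β) := mod_cast card_le_univ A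
  have hB : (#B : ℝ) ≤ Fintype.card (α × β) := mod_cast card_le_univ B
  calc (#(A ∆ B) : ℝ) ≤ 2 * √(Fintype.card β) * (ε * (#A + #B)) :=
        hXY.trans (by gcongr; exact h.sum_signVec_sub_le X Y)
    _ ≤ 2 * √(Fintype.card β) * (ε * (Fintype.card (α × β) + Fintype.card (α × β))) := by gcongr
    _ = 4 * ε * √(Fintype.card β) * Fintype.card (α × β) := by ring

lemma Confusable.symmDiff_mem_lightSets [Nonempty α] [Nonempty β] (hε : 0 ≤ ε)
    (hsmall : 16 * ε * √(Fintype.card β) < 1)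
    (h : Confusable ε (bipartiteCutValue A) (bipartiteCutValue B)) :
    A ∆ B ∈ lightSets (α × β) := by
  have hpos : (0 : ℝ) < Fintype.card (α × β) := mod_cast Fintype.card_pos
  have hlight : (4 * #(A ∆ B) : ℝ) < Fintype.card (α × β) := by
    nlinarith [h.card_symmDiff_le hε]
  rw [lightSets, mem_filter_univ]
  exact_mod_cast hlight

end BipartiteCut

section BlockGraph

variable {n : ℕ} {τ α β : Type*} (φ : τ × (α ⊕ β) ↪ Fin n)

/-- The cuts of `G` as a real-valued function of the vertex set, the query answered by a cut
sketch. -/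
noncomputable def cutValue (G : SimpleGraph (Fin n)) (S : Finset (Fin n)) : ℝ := cutSize G S

/-- The graph which consists of a bipartite graph on a copy of `α ⊕ β`, with edge set `f t`, for
each `t : τ`. The embedding `φ` places these blocks into the vertex set. -/
def blockGraph (f : τ → Finset (α × β)) : SimpleGraph (Fin n) :=
  .fromRel fun u v => ∃ t, ∃ e ∈ f t, u = φ (t, .inl e.1) ∧ v = φ (t, .inr e.2)

/-- The vertex set which consists of `X` and `Y` on the two sides of the block `t`. -/
def blockSet (t : τ) (X : Finset α) (Y : Finset β) : Finset (Fin n) :=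
  ({t} ×ˢ X.disjSum Y).map φ

variable {φ}

lemma apply_mem_blockSet {t t' : τ} {X : Finset α} {Y : Finset β} {x : α ⊕ β} :
    φ (t', x) ∈ blockSet φ t X Y ↔ t' = t ∧ x ∈ X.disjSum Y := by
  rw [blockSet, mem_map', mem_product, mem_singleton]

lemma blockGraph_adj {f : τ → Finset (α × β)} {u v : Fin n} :
    (blockGraph φ f).Adj u v ↔ ∃ t, ∃ e ∈ f t,
      (u = φ (t, .inl e.1) ∧ v = φ (t, .inr e.2)) ∨
        (u = φ (t, .inr e.2) ∧ v = φ (t, .inl e.1)) := by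
  rw [blockGraph, SimpleGraph.fromRel_adj]
  constructor
  · rintro ⟨-, ⟨t, e, he, hu, hv⟩ | ⟨t, e, he, hv, hu⟩⟩
    exacts [⟨t, e, he, .inl ⟨hu, hv⟩⟩, ⟨t, e, he, .inr ⟨hu, hv⟩⟩]
  · rintro ⟨t, e, he, ⟨rfl, rfl⟩ | ⟨rfl, rfl⟩⟩
    exacts [⟨by simp, .inl ⟨t, e, he, rfl, rfl⟩⟩, ⟨by simp, .inr ⟨t, e, he, rfl, rfl⟩⟩]

lemma cutSize_blockGraph_blockSet (f : τ → Finset (α × β)) (t : τ) (X : Finset α) (Y : Finset β) :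
    cutSize (blockGraph φ f) (blockSet φ t X Y) = bipartiteCut (f t) X Y := by
  symm
  refine card_bij (fun e _ => if e.1 ∈ X then (φ (t, .inl e.1), φ (t, .inr e.2))
    else (φ (t, .inr e.2), φ (t, .inl e.1))) ?_ ?_ ?_
  · intro e he
    obtain ⟨he, hcross⟩ := mem_filter.mp he
    rw [mem_filter_univ]
    split_ifs with hX
    · have hY : e.2 ∉ Y := by tauto
      exact ⟨by simpa [apply_mem_blockSet], by simpa [apply_mem_blockSet],
        blockGraph_adj.mpr ⟨t, e, he, .inl ⟨rfl, rfl⟩⟩⟩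
    · have hY : e.2 ∈ Y := by tauto
      exact ⟨by simpa [apply_mem_blockSet], by simpa [apply_mem_blockSet],
        blockGraph_adj.mpr ⟨t, e, he, .inr ⟨rfl, rfl⟩⟩⟩
  · intro e _ e' _ h
    split_ifs at h <;> simp_all [Prod.ext_iff]
  · rintro ⟨u, v⟩ huv
    obtain ⟨hu, hv, hadj⟩ := mem_filter_univ _ |>.mp huv
    obtain ⟨t', e, he, ⟨rfl, rfl⟩ | ⟨rfl, rfl⟩⟩ := blockGraph_adj.mp hadj
    · obtain ⟨rfl, hX⟩ : t' = t ∧ e.1 ∈ X := by simpa [apply_mem_blockSet] using hu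
      have hY : e.2 ∉ Y := by simpa [apply_mem_blockSet] using hv
      exact ⟨e, by simp [he, hX, hY], by simp [hX]⟩
    · obtain ⟨rfl, hY⟩ : t' = t ∧ e.2 ∈ Y := by simpa [apply_mem_blockSet] using hu
      have hX : e.1 ∉ X := by simpa [apply_mem_blockSet] using hv
      exact ⟨e, by simp [he, hX, hY], by simp [hX]⟩

lemma Confusable.of_blockGraph {ε : ℝ} {f g : τ → Finset (α × β)}
    (h : Confusable ε (cutValue (blockGraph φ f)) (cutValue (blockGraph φ g))) (t : τ) :
    Confusable ε (bipartiteCutValue (f t)) (bipartiteCutValue (g t)) := fun q => by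
  simpa only [cutValue, bipartiteCutValue, cutSize_blockGraph_blockSet] using
    h (blockSet φ t q.1 q.2)

end BlockGraph

section LowerBound

variable {n : ℕ} {R : Type*} [Fintype R] {ρ : R → ℝ} {ε : ℝ}

theorem IsForAllSketch.mul_two_pow_le {M τ α β : Type*} [Fintype M] [Fintype τ] [Fintype α]
    [Fintype β] {p : ℝ} {ske : SimpleGraph (Fin n) → R → M} {est : Finset (Fin n) → M → R → ℝ}
    (h : IsForAllSketch ε p ρ cutValue ske est) (hρ : ∀ r, 0 ≤ ρ r) (hρ_sum : ∑ r, ρ r = 1)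
    (φ : τ × (α ⊕ β) ↪ Fin n) (W : Finset (Finset (α × β)))
    (hW : ∀ A B : Finset (α × β),
      Confusable ε (bipartiteCutValue A) (bipartiteCutValue B) → A ∆ B ∈ W) :
    p * 2 ^ (Fintype.card (α × β) * Fintype.card τ) ≤ #W ^ Fintype.card τ * Fintype.card M := by
  have hblocks : IsForAllSketch ε p ρ (fun f => cutValue (blockGraph φ f))
      (fun f => ske (blockGraph φ f)) est := fun f => h (blockGraph φ f)
  have hcount := hblocks.mul_card_le hρ hρ_sum fun J hJ =>
    card_le_card_pow_of_symmDiff_mem W fun f hf g hg t =>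
      hW (f t) (g t) ((hJ f hf g hg).of_blockGraph t)
  rw [Fintype.card_fun, Fintype.card_finset, ← pow_mul] at hcount
  exact_mod_cast hcount

lemma nonempty_embedding_blocks {b k : ℕ} (h : b * (2 * k) ≤ n) :
    Nonempty (Fin b × (Fin k ⊕ Fin k) ↪ Fin n) :=
  Function.Embedding.nonempty_of_card_le (by simpa [← two_mul] using h)

variable {m k : ℕ} {ske : SimpleGraph (Fin n) → R → Fin m → Bool}
  {est : Finset (Fin n) → (Fin m → Bool) → R → ℝ}

lemma IsForAllSketch.half_le_bits (h : IsForAllSketch ε (3 / 4) ρ cutValue ske est)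
    (hρ : ∀ r, 0 ≤ ρ r) (hρ_sum : ∑ r, ρ r = 1) (hε : ε < 1) : n / 2 ≤ m := by
  obtain ⟨φ⟩ := nonempty_embedding_blocks (k := 1) (Nat.div_mul_le_self n 2)
  have hcount := h.mul_two_pow_le hρ hρ_sum φ {∅} fun A B hAB => by
    simp [hAB.eq_of_subsingleton hε]
  simp only [Fintype.card_prod, Fintype.card_fin, Fintype.card_fun, Fintype.card_bool,
    card_singleton, one_mul, Nat.cast_one, one_pow, Nat.cast_pow, Nat.cast_ofNat] at hcount
  have hlt : (2 : ℝ) ^ (n / 2) < 2 ^ (m + 1) := by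
    have : (0 : ℝ) < 2 ^ m := by positivity
    rw [pow_succ]
    linarith
  exact Nat.lt_succ_iff.mp ((pow_lt_pow_iff_right₀ one_lt_two).mp hlt)

lemma IsForAllSketch.edges_le_bits (h : IsForAllSketch ε (3 / 4) ρ cutValue ske est)
    (hρ : ∀ r, 0 ≤ ρ r) (hρ_sum : ∑ r, ρ r = 1) (hε : 0 ≤ ε) (hk : k ≠ 0)
    (hsmall : 16 * ε * √k < 1) : k * k * (n / (2 * k)) ≤ 8 * (m + 1) := by
  have : NeZero k := ⟨hk⟩
  set b := n / (2 * k)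
  obtain ⟨φ⟩ := nonempty_embedding_blocks (Nat.div_mul_le_self n (2 * k))
  have hcount := h.mul_two_pow_le hρ hρ_sum φ (lightSets (Fin k × Fin k)) fun A B hAB =>
    hAB.symmDiff_mem_lightSets hε (by simpa using hsmall)
  have hlight := card_lightSets_pow_eight_mul_le (β := Fin k × Fin k)
  simp only [Fintype.card_prod, Fintype.card_fin, Fintype.card_fun, Fintype.card_bool]
    at hcount hlight
  set W := #(lightSets (Fin k × Fin k))
  have hfamily : 2 ^ (k * k * b) ≤ W ^ b * 2 ^ (m + 1) := by
    have : 3 / 4 * 2 ^ (k * k * b) ≤ (W : ℝ) ^ b * 2 ^ m := mod_cast hcount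
    have : (2 : ℝ) ^ (k * k * b) ≤ W ^ b * 2 ^ (m + 1) := by
      have : (0 : ℝ) ≤ W ^ b * 2 ^ m := by positivity
      rw [pow_succ]
      linarith
    exact_mod_cast this
  have hpow : 2 ^ (8 * (k * k * b) + k * k * b) ≤ 2 ^ (8 * (k * k * b) + 8 * (m + 1)) := by
    calc 2 ^ (8 * (k * k * b) + k * k * b)
        = (2 ^ (k * k * b)) ^ 8 * 2 ^ (k * k * b) := by ring
      _ ≤ (W ^ b * 2 ^ (m + 1)) ^ 8 * 2 ^ (k * k * b) := by gcongr
      _ = (W ^ 8 * 2 ^ (k * k)) ^ b * 2 ^ (8 * (m + 1)) := by ring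
      _ ≤ (2 ^ (8 * (k * k))) ^ b * 2 ^ (8 * (m + 1)) := by gcongr
      _ = 2 ^ (8 * (k * k * b) + 8 * (m + 1)) := by ring
  exact Nat.add_le_add_iff_left.mp ((Nat.pow_le_pow_iff_right one_lt_two).mp hpow)

theorem IsForAllSketch.succ_mul_le_bits (h : IsForAllSketch ε (3 / 4) ρ cutValue ske est)
    (hρ : ∀ r, 0 ≤ ρ r) (hρ_sum : ∑ r, ρ r = 1) (hε0 : 0 ≤ ε) (hε1 : ε < 1) (hn : 2 ≤ n)
    (hkn : 2 * k ≤ n) (hsmall : 256 * ε ^ 2 * k < 1) : (k + 1) * n ≤ 128 * m := by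
  have hhalf := h.half_le_bits hρ hρ_sum hε1
  rcases k.eq_zero_or_pos with rfl | hk
  · lia
  have hsqrt : 16 * ε * √k < 1 := by
    refine (sq_lt_one_iff₀ (by positivity)).mp ?_
    rw [mul_pow, Real.sq_sqrt (Nat.cast_nonneg k)]
    linarith
  have hedges := h.edges_le_bits hρ hρ_sum hε0 hk.ne' hsqrt
  set b := n / (2 * k)
  have hb : 1 ≤ b := (Nat.one_le_div_iff (by lia)).mpr hkn
  have hn_lt : n < 2 * k * (b + 1) := Nat.lt_mul_div_succ n (by lia)
  calc (k + 1) * n ≤ (2 * k) * (4 * (k * b)) := by gcongr <;> nlinarith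
    _ = 8 * (k * k * b) := by ring
    _ ≤ 8 * (16 * m) := by lia
    _ = 128 * m := by ring

theorem IsForAllSketch.le_mul_bits (h : IsForAllSketch ε (3 / 4) ρ cutValue ske est)
    (hρ : ∀ r, 0 ≤ ρ r) (hρ_sum : ∑ r, ρ r = 1) (hε0 : 0 < ε) (hε1 : ε < 1) (hn : 2 ≤ n)
    (hnε : 1 < ε ^ 2 * n) : n ≤ 64000 * ε ^ 2 * m := by
  set k := ⌊1 / (500 * ε ^ 2)⌋₊
  have hk_le : k * (500 * ε ^ 2) ≤ 1 :=
    (le_div_iff₀ (by positivity)).mp (Nat.floor_le (by positivity))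
  have hk_lt : 1 < (k + 1) * (500 * ε ^ 2) :=
    (div_lt_iff₀ (by positivity)).mp (Nat.lt_floor_add_one _)
  have hkn : 2 * k ≤ n := by
    have : (2 * k : ℝ) ≤ n := le_of_mul_le_mul_left (by linarith) (pow_pos hε0 2)
    exact_mod_cast this
  have hbits : ((k + 1) * n : ℝ) ≤ 128 * m :=
    mod_cast h.succ_mul_le_bits hρ hρ_sum hε0.le hε1 hn hkn (by linarith)
  calc (n : ℝ) ≤ (k + 1) * (500 * ε ^ 2) * n := le_mul_of_one_le_left n.cast_nonneg hk_lt.le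
    _ = 500 * ε ^ 2 * ((k + 1) * n) := by ring
    _ ≤ 500 * ε ^ 2 * (128 * m) := by gcongr
    _ = 64000 * ε ^ 2 * m := by ring

end LowerBound

end CutSketch

theorem stmt_0 :
    ∃ c : ℝ, 0 < c ∧
      ∀ (n : ℕ), 2 ≤ n → ∀ ε : ℝ, 1 / Real.sqrt n < ε → ε < 1 →
      ∀ (m : ℕ) (R : Type) [Fintype R] (ρ : R → ℝ),
        (∀ r, 0 ≤ ρ r) → (∑ r : R, ρ r) = 1 →
        ∀ (ske : SimpleGraph (Fin n) → R → (Fin m → Bool))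
          (est : Finset (Fin n) → (Fin m → Bool) → R → ℝ),
          (∀ G : SimpleGraph (Fin n),
            (3 : ℝ) / 4 ≤
              ∑ r ∈ Finset.univ.filter (fun r : R =>
                ∀ S : Finset (Fin n),
                  (1 - ε) * (cutSize G S : ℝ) ≤ est S (ske G r) r ∧
                    est S (ske G r) r ≤ (1 + ε) * (cutSize G S : ℝ)), ρ r) →
          c * n / ε ^ 2 ≤ (m : ℝ) := by
  refine ⟨1 / 64000, by norm_num, fun n hn ε hεn hε1 m R _ ρ hρ hρ_sum ske est hest => ?_⟩
  have hsketch : CutSketch.IsForAllSketch ε (3 / 4) ρ CutSketch.cutValue ske est :=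
    fun G => by convert hest G; rfl
  have hn0 : (0 : ℝ) < n := by positivity
  have hε0 : 0 < ε := lt_trans (by positivity) hεn
  have hnε : 1 < ε ^ 2 * n := by
    rw [div_lt_iff₀ (by positivity)] at hεn
    simpa [mul_pow, hn0.le] using one_lt_pow₀ hεn two_ne_zero
  rw [div_le_iff₀ (by positivity)]
  linarith [hsketch.le_mul_bits hρ hρ_sum hε0 hε1 hn hnε]
end

section
/- There is an absolute constant c > 0 such that for every integer n ≥ 2 and every real ε with 1/√n < ε < 1, there exists a simple unweighted graph G on n vertices with the following property: every weighted graph H on the same vertex set (with nonnegative real edge weights, not required to be a subgraph of G) satisfying, for every subset S of the vertices, |∂_G(S,S̄)|/(1+ε) ≤ w_H(S,S̄) ≤ (1+ε)·|∂_G(S,S̄)|, must have at least c·n/ε² edges of positive weight. -/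
open scoped Classical

/-- Total weight of the edges of the weighted graph `w` with exactly one endpoint in `S`
(each unordered crossing edge counted once). -/
noncomputable def cutW {n : ℕ} (w : Fin n → Fin n → ℝ) (S : Finset (Fin n)) : ℝ :=
  ∑ p ∈ Finset.univ.filter (fun p : Fin n × Fin n => p.1 ∈ S ∧ p.2 ∉ S), w p.1 p.2

/-!
Take for `G` a disjoint union of cliques on `2 * m` vertices with `m` of order `1 / ε ^ 2`, and let
`w` be a sparsifier of `G`. For disjoint `A` and `B`, twice the weight between `A` and `B` is
`cut A + cut B - cut (A ∪ B)`. So, for the two halves `L` and `R` of a clique, the matrix `w - 1`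
on `L × R` has all its sub-rectangle sums of order at most `ε * m ^ 2`.

Khintchine's inequality turns this cut-norm bound into a bound of the same order for the sum over
the rows of the Euclidean norm of the row. If half of the pairs in `L × R` had no positive weight,
that sum would be at least of order `m * √m`. Hence, when `ε * √m` is small, every clique
contributes at least `m ^ 2 / 2` edges, and there are about `n / (2 * m)` cliques. If no `m > 1`
makes `ε * √m` small, take `m = 1`: an edge that is a connected component of `G` carries positive
weight, because a cut separating its endpoints must.
-/

open Finset

section Khintchine

variable {ι M R : Type*} [DecidableEq ι]

/-- The Rademacher sum `∑ j ∈ s, ± a j` in which the sign is `+` on `T` and `-` on `s \ T`. As `T`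
runs through the subsets of `s`, the signs run through all choices. -/
def signedSum [AddCommGroup M] (s T : Finset ι) (a : ι → M) : M :=
  ∑ j ∈ T, a j - ∑ j ∈ s \ T, a j

lemma signedSum_insert_insert [AddCommGroup M] {s T : Finset ι} {x : ι} (hx : x ∉ s) (hT : T ⊆ s)
    (a : ι → M) : signedSum (insert x s) (insert x T) a = signedSum s T a + a x := by
  have hxs : insert x s \ insert x T = s \ T := by
    rw [insert_sdiff_insert, sdiff_insert_of_notMem hx]
  rw [signedSum, signedSum, hxs, sum_insert fun h => hx (hT h)]
  abel

lemma signedSum_insert [AddCommGroup M] {s T : Finset ι} {x : ι} (hx : x ∉ s) (hT : T ⊆ s)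
    (a : ι → M) : signedSum (insert x s) T a = signedSum s T a - a x := by
  rw [signedSum, signedSum, insert_sdiff_of_notMem s fun h => hx (hT h),
    sum_insert fun h => hx (mem_sdiff.mp h).1]
  abel

lemma sum_powerset_insert_signedSum [AddCommGroup M] [AddCommMonoid R] {s : Finset ι} {x : ι}
    (hx : x ∉ s) (a : ι → M) (f : M → R) :
    ∑ T ∈ (insert x s).powerset, f (signedSum (insert x s) T a) =
      ∑ T ∈ s.powerset, (f (signedSum s T a - a x) + f (signedSum s T a + a x)) := by
  rw [sum_powerset_insert hx, ← sum_add_distrib]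
  refine sum_congr rfl fun T hT => ?_
  rw [signedSum_insert hx (mem_powerset.mp hT), signedSum_insert_insert hx (mem_powerset.mp hT)]

lemma sum_powerset_signedSum_sq [CommRing R] (s : Finset ι) (a : ι → R) :
    ∑ T ∈ s.powerset, signedSum s T a ^ 2 = 2 ^ #s * ∑ j ∈ s, a j ^ 2 := by
  induction s using Finset.induction_on with
  | empty => simp [signedSum]
  | insert x s hx ih =>
    have expand (y : R) : (y - a x) ^ 2 + (y + a x) ^ 2 = 2 * y ^ 2 + 2 * a x ^ 2 := by ring
    simp only [sum_powerset_insert_signedSum hx a (· ^ 2), expand, sum_add_distrib, ← mul_sum, ih,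
      sum_const, card_powerset, nsmul_eq_mul, card_insert_of_notMem hx, sum_insert hx]
    push_cast
    ring

lemma sum_powerset_signedSum_pow_four_le [CommRing R] [LinearOrder R] [IsStrictOrderedRing R]
    (s : Finset ι) (a : ι → R) :
    ∑ T ∈ s.powerset, signedSum s T a ^ 4 ≤ 3 * 2 ^ #s * (∑ j ∈ s, a j ^ 2) ^ 2 := by
  induction s using Finset.induction_on with
  | empty => simp [signedSum]
  | insert x s hx ih =>
    have expand (y : R) : (y - a x) ^ 4 + (y + a x) ^ 4 =
        2 * y ^ 4 + 12 * a x ^ 2 * y ^ 2 + 2 * a x ^ 4 := by ring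
    simp only [sum_powerset_insert_signedSum hx a (· ^ 4), expand, sum_add_distrib, ← mul_sum,
      sum_powerset_signedSum_sq, sum_const, card_powerset, nsmul_eq_mul,
      card_insert_of_notMem hx, sum_insert hx]
    push_cast
    have : 0 ≤ 2 ^ #s * a x ^ 4 := by positivity
    linear_combination 2 * ih + 4 * this

-- The difference of the two sides is `|x| * (|x| - 2 * σ) ^ 2 * (|x| + 4 * σ)`.
lemma twelve_mul_sq_sub_pow_four_le_abs {σ : ℝ} (hσ : 0 ≤ σ) (x : ℝ) :
    12 * σ ^ 2 * x ^ 2 - x ^ 4 ≤ 16 * σ ^ 3 * |x| := by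
  have : 0 ≤ |x| * (|x| - 2 * σ) ^ 2 * (|x| + 4 * σ) := by positivity
  rw [← sq_abs x, ← Even.pow_abs (by decide : Even 4) x]
  linear_combination this

/-- **Khintchine's inequality** in `L¹`. -/
theorem nine_mul_sqrt_sum_sq_le_sum_abs_signedSum (s : Finset ι) (a : ι → ℝ) :
    9 * 2 ^ #s * √(∑ j ∈ s, a j ^ 2) ≤ 16 * ∑ T ∈ s.powerset, |signedSum s T a| := by
  set σ := √(∑ j ∈ s, a j ^ 2)
  have hσ_sq : σ ^ 2 = ∑ j ∈ s, a j ^ 2 := Real.sq_sqrt (sum_nonneg fun _ _ => sq_nonneg _)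
  have hσ_nonneg : 0 ≤ σ := Real.sqrt_nonneg _
  obtain hσ_zero | hσ_pos := hσ_nonneg.eq_or_lt
  · rw [← hσ_zero, mul_zero]
    positivity
  refine le_of_mul_le_mul_left ?_ (pow_pos hσ_pos 3)
  calc σ ^ 3 * (9 * 2 ^ #s * σ)
      = 12 * σ ^ 2 * (2 ^ #s * σ ^ 2) - 3 * 2 ^ #s * (σ ^ 2) ^ 2 := by ring
    _ ≤ 12 * σ ^ 2 * ∑ T ∈ s.powerset, signedSum s T a ^ 2
          - ∑ T ∈ s.powerset, signedSum s T a ^ 4 := by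
        rw [sum_powerset_signedSum_sq, ← hσ_sq]
        gcongr
        exact hσ_sq ▸ sum_powerset_signedSum_pow_four_le s a
    _ = ∑ T ∈ s.powerset, (12 * σ ^ 2 * signedSum s T a ^ 2 - signedSum s T a ^ 4) := by
        rw [sum_sub_distrib, mul_sum]
    _ ≤ ∑ T ∈ s.powerset, 16 * σ ^ 3 * |signedSum s T a| :=
        sum_le_sum fun _ _ => twelve_mul_sq_sub_pow_four_le_abs hσ_nonneg _
    _ = σ ^ 3 * (16 * ∑ T ∈ s.powerset, |signedSum s T a|) := by
        rw [← mul_sum]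
        ring

end Khintchine

section Rectangles

variable {ι κ : Type*} {L : Finset ι} {R : Finset κ} {δ : ℝ}

lemma sum_abs_le_two_mul_of_abs_sum_le {f : ι → ℝ} (h : ∀ A ⊆ L, |∑ i ∈ A, f i| ≤ δ) :
    ∑ i ∈ L, |f i| ≤ 2 * δ := by
  have hpos : ∑ i ∈ L with 0 ≤ f i, |f i| ≤ δ := by
    rw [sum_congr rfl fun i hi => abs_of_nonneg (mem_filter.mp hi).2]
    exact (abs_le.mp (h _ (filter_subset _ _))).2
  have hneg : ∑ i ∈ L with ¬ 0 ≤ f i, |f i| ≤ δ := by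
    rw [sum_congr rfl fun i hi => abs_of_neg (not_le.mp (mem_filter.mp hi).2), sum_neg_distrib]
    exact neg_le.mp (abs_le.mp (h _ (filter_subset _ _))).1
  rw [← sum_filter_add_sum_filter_not L fun i => 0 ≤ f i]
  linarith

lemma sum_abs_signedSum_le {M : ι → κ → ℝ}
    (h : ∀ A ⊆ L, ∀ B ⊆ R, |∑ i ∈ A, ∑ j ∈ B, M i j| ≤ δ) {T : Finset κ} (hT : T ⊆ R) :
    ∑ i ∈ L, |signedSum R T (M i)| ≤ 4 * δ := by
  have hrow : ∀ A ⊆ L, |∑ i ∈ A, signedSum R T (M i)| ≤ 2 * δ := fun A hA => by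
    simp only [signedSum, sum_sub_distrib]
    exact (abs_sub _ _).trans (by linarith [h A hA T hT, h A hA (R \ T) sdiff_subset])
  linarith [sum_abs_le_two_mul_of_abs_sum_le hrow]

/-- A mixed-norm form of **Littlewood's 4/3 inequality**. -/
theorem sum_sqrt_sum_sq_le_of_abs_sum_sum_le {M : ι → κ → ℝ}
    (h : ∀ A ⊆ L, ∀ B ⊆ R, |∑ i ∈ A, ∑ j ∈ B, M i j| ≤ δ) :
    9 * ∑ i ∈ L, √(∑ j ∈ R, M i j ^ 2) ≤ 64 * δ := by
  refine le_of_mul_le_mul_left ?_ (by positivity : (0 : ℝ) < 2 ^ #R)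
  calc 2 ^ #R * (9 * ∑ i ∈ L, √(∑ j ∈ R, M i j ^ 2))
      = ∑ i ∈ L, 9 * 2 ^ #R * √(∑ j ∈ R, M i j ^ 2) := by
        rw [← mul_sum]
        ring
    _ ≤ ∑ i ∈ L, 16 * ∑ T ∈ R.powerset, |signedSum R T (M i)| :=
        sum_le_sum fun i _ => nine_mul_sqrt_sum_sq_le_sum_abs_signedSum R (M i)
    _ = 16 * ∑ T ∈ R.powerset, ∑ i ∈ L, |signedSum R T (M i)| := by rw [← mul_sum, sum_comm]
    _ ≤ 16 * ∑ T ∈ R.powerset, 4 * δ := by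
        gcongr with T hT
        exact sum_abs_signedSum_le h (mem_powerset.mp hT)
    _ = 2 ^ #R * (64 * δ) := by
        simp only [sum_const, card_powerset, nsmul_eq_mul, Nat.cast_pow, Nat.cast_ofNat]
        ring

lemma card_nonpos_le_sqrt_mul_sqrt (s : Finset κ) (a : κ → ℝ) :
    (#{j ∈ s | a j ≤ 0} : ℝ) ≤ √(#s : ℝ) * √(∑ j ∈ s, (a j - 1) ^ 2) := by
  have hcard : (#{j ∈ s | a j ≤ 0} : ℝ) ≤ #s := mod_cast card_filter_le _ _
  have hsum : (#{j ∈ s | a j ≤ 0} : ℝ) ≤ ∑ j ∈ s, (a j - 1) ^ 2 := by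
    rw [card_filter, Nat.cast_sum]
    refine sum_le_sum fun j _ => ?_
    split_ifs with hj
    · push_cast
      nlinarith
    · push_cast
      positivity
  calc (#{j ∈ s | a j ≤ 0} : ℝ)
      = √(#{j ∈ s | a j ≤ 0} : ℝ) * √(#{j ∈ s | a j ≤ 0} : ℝ) :=
        (Real.mul_self_sqrt (Nat.cast_nonneg _)).symm
    _ ≤ √(#s : ℝ) * √(∑ j ∈ s, (a j - 1) ^ 2) := by gcongr

lemma card_nonpos_le_of_abs_sum_sum_sub_one_le {w : ι → κ → ℝ}
    (h : ∀ A ⊆ L, ∀ B ⊆ R, |∑ i ∈ A, ∑ j ∈ B, (w i j - 1)| ≤ δ) :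
    9 * (#{p ∈ L ×ˢ R | w p.1 p.2 ≤ 0} : ℝ) ≤ 64 * δ * √(#R : ℝ) := by
  have hrows : #{p ∈ L ×ˢ R | w p.1 p.2 ≤ 0} = ∑ i ∈ L, #{j ∈ R | w i j ≤ 0} := by
    simp only [card_filter, sum_product]
  calc 9 * (#{p ∈ L ×ˢ R | w p.1 p.2 ≤ 0} : ℝ)
      = 9 * ∑ i ∈ L, (#{j ∈ R | w i j ≤ 0} : ℝ) := by rw [hrows, Nat.cast_sum]
    _ ≤ 9 * ∑ i ∈ L, √(#R : ℝ) * √(∑ j ∈ R, (w i j - 1) ^ 2) := by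
        gcongr with i
        exact card_nonpos_le_sqrt_mul_sqrt R (w i)
    _ = √(#R : ℝ) * (9 * ∑ i ∈ L, √(∑ j ∈ R, (w i j - 1) ^ 2)) := by
        rw [← mul_sum]
        ring
    _ ≤ √(#R : ℝ) * (64 * δ) :=
        mul_le_mul_of_nonneg_left (sum_sqrt_sum_sq_le_of_abs_sum_sum_le h) (Real.sqrt_nonneg _)
    _ = 64 * δ * √(#R : ℝ) := mul_comm _ _

end Rectangles

section Cuts

variable {n : ℕ} {ε : ℝ} {G : SimpleGraph (Fin n)} {w : Fin n → Fin n → ℝ}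
  {A B L R : Finset (Fin n)}

lemma cutW_eq_sum_sum_compl (w : Fin n → Fin n → ℝ) (S : Finset (Fin n)) :
    cutW w S = ∑ u ∈ S, ∑ v ∈ Sᶜ, w u v := by
  rw [cutW, ← sum_product']
  exact sum_congr (by ext; simp) fun _ _ => rfl

lemma cutSize_eq_cutW_adjMatrix (G : SimpleGraph (Fin n)) (S : Finset (Fin n)) :
    (cutSize G S : ℝ) = cutW (G.adjMatrix ℝ) S := by
  simp only [cutSize, cutW, SimpleGraph.adjMatrix_apply, sum_boole, filter_filter, and_assoc]

lemma cutW_eq_sum_sum_add_sum_sum_compl_union (w : Fin n → Fin n → ℝ) (hAB : Disjoint A B) :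
    cutW w A = ∑ u ∈ A, ∑ v ∈ B, w u v + ∑ u ∈ A, ∑ v ∈ (A ∪ B)ᶜ, w u v := by
  have hcompl : Aᶜ = B ∪ (A ∪ B)ᶜ := by
    rw [compl_union, union_inter_distrib_left, union_compl, inter_univ,
      union_eq_right.mpr (subset_compl_comm.mp (le_compl_iff_disjoint_right.mpr hAB))]
  have hdisj : Disjoint B (A ∪ B)ᶜ := disjoint_compl_right.mono_left subset_union_right
  simp only [cutW_eq_sum_sum_compl, hcompl, sum_union hdisj, sum_add_distrib]

lemma cutW_add_cutW_sub_cutW_union (hw : ∀ u v, w u v = w v u) (hAB : Disjoint A B) :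
    cutW w A + cutW w B - cutW w (A ∪ B) = 2 * ∑ u ∈ A, ∑ v ∈ B, w u v := by
  have hswap : ∑ u ∈ B, ∑ v ∈ A, w u v = ∑ u ∈ A, ∑ v ∈ B, w u v := by
    rw [sum_comm]
    simp only [hw]
  rw [cutW_eq_sum_sum_add_sum_sum_compl_union w hAB,
    cutW_eq_sum_sum_add_sum_sum_compl_union w hAB.symm, hswap, union_comm B A,
    cutW_eq_sum_sum_compl w (A ∪ B), sum_union hAB]
  ring

/-- `w` is a `(1 + ε)`-cut sparsifier of `G`: every cut of `w` agrees with that of `G` up to a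
factor `1 + ε`. Neither symmetry nor nonnegativity of `w` is part of the notion. -/
def IsCutSparsifier (ε : ℝ) (G : SimpleGraph (Fin n)) (w : Fin n → Fin n → ℝ) : Prop :=
  ∀ S, (cutSize G S : ℝ) / (1 + ε) ≤ cutW w S ∧ cutW w S ≤ (1 + ε) * cutSize G S

/-- The edges of positive weight of a symmetric `w`, each listed once, smaller endpoint first. -/
noncomputable def positiveEdges (w : Fin n → Fin n → ℝ) : Finset (Fin n × Fin n) :=
  {p | p.1 < p.2 ∧ 0 < w p.1 p.2}

namespace IsCutSparsifier

lemma abs_cutW_sub_cutSize_le (h : IsCutSparsifier ε G w) (hε : 0 ≤ ε) (S : Finset (Fin n)) :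
    |cutW w S - cutSize G S| ≤ ε * cutSize G S := by
  obtain ⟨hlower, hupper⟩ := h S
  have hdiv : (1 - ε) * (cutSize G S : ℝ) ≤ cutSize G S / (1 + ε) := by
    rw [le_div_iff₀ (by positivity)]
    nlinarith [mul_nonneg (cutSize G S).cast_nonneg (sq_nonneg ε)]
  rw [abs_le]
  constructor <;> linarith

lemma abs_sum_sum_sub_adjMatrix_le (h : IsCutSparsifier ε G w) (hε : 0 ≤ ε)
    (hw : ∀ u v, w u v = w v u) (hAB : Disjoint A B) :
    2 * |∑ u ∈ A, ∑ v ∈ B, (w u v - G.adjMatrix ℝ u v)| ≤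
      ε * (cutSize G A + cutSize G B + cutSize G (A ∪ B)) := by
  have hw_cut := cutW_add_cutW_sub_cutW_union hw hAB
  have hG_cut := cutW_add_cutW_sub_cutW_union (w := G.adjMatrix ℝ)
    (fun u v => G.isSymm_adjMatrix.apply v u) hAB
  simp only [← cutSize_eq_cutW_adjMatrix] at hG_cut
  obtain ⟨hA₁, hA₂⟩ := abs_le.mp (h.abs_cutW_sub_cutSize_le hε A)
  obtain ⟨hB₁, hB₂⟩ := abs_le.mp (h.abs_cutW_sub_cutSize_le hε B)
  obtain ⟨hU₁, hU₂⟩ := abs_le.mp (h.abs_cutW_sub_cutSize_le hε (A ∪ B))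
  simp only [sum_sub_distrib]
  rw [← abs_two, ← abs_mul, abs_le]
  constructor <;> linarith

lemma card_nonpos_le (h : IsCutSparsifier ε G w) (hε : 0 ≤ ε) (hw : ∀ u v, w u v = w v u)
    (hLR : Disjoint L R) (hadj : ∀ u ∈ L, ∀ v ∈ R, G.Adj u v) {K : ℝ}
    (hK : ∀ S ⊆ L ∪ R, (cutSize G S : ℝ) ≤ K) :
    9 * (#{p ∈ L ×ˢ R | w p.1 p.2 ≤ 0} : ℝ) ≤ 96 * (ε * K) * √(#R : ℝ) := by
  have hrect : ∀ A ⊆ L, ∀ B ⊆ R, |∑ u ∈ A, ∑ v ∈ B, (w u v - 1)| ≤ 3 / 2 * (ε * K) := by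
    intro A hA B hB
    have hone : ∑ u ∈ A, ∑ v ∈ B, (w u v - 1) =
        ∑ u ∈ A, ∑ v ∈ B, (w u v - G.adjMatrix ℝ u v) :=
      sum_congr rfl fun u hu => sum_congr rfl fun v hv => by
        rw [SimpleGraph.adjMatrix_apply, if_pos (hadj u (hA hu) v (hB hv))]
    have hcuts : (cutSize G A + cutSize G B + cutSize G (A ∪ B) : ℝ) ≤ 3 * K := by
      linarith [hK A (hA.trans subset_union_left), hK B (hB.trans subset_union_right),
        hK (A ∪ B) (union_subset_union hA hB)]
    have := h.abs_sum_sum_sub_adjMatrix_le hε hw (disjoint_of_subset_left hA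
      (disjoint_of_subset_right hB hLR))
    rw [hone]
    linarith [mul_le_mul_of_nonneg_left hcuts hε]
  linarith [card_nonpos_le_of_abs_sum_sum_sub_one_le hrect]

lemma pos_of_adj_of_cutSize_pair_eq_zero (h : IsCutSparsifier ε G w) (hε : 0 ≤ ε)
    (hw : ∀ u v, w u v = w v u) {a b : Fin n} (hab : G.Adj a b) (hiso : cutSize G {a, b} = 0) :
    0 < w a b := by
  have hcut := cutW_add_cutW_sub_cutW_union hw (disjoint_singleton.mpr hab.ne)
  rw [sum_singleton, sum_singleton, ← insert_eq] at hcut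
  have ha : 0 < (cutSize G {a} : ℝ) / (1 + ε) := by
    have : 0 < cutSize G {a} := card_pos.mpr ⟨(a, b), by simp [hab, hab.ne']⟩
    positivity
  have hb : 0 ≤ (cutSize G {b} : ℝ) / (1 + ε) := by positivity
  have hpair := (h {a, b}).2
  rw [hiso, Nat.cast_zero, mul_zero] at hpair
  linarith [(h {a}).1, (h {b}).1]

end IsCutSparsifier

end Cuts

section ClusterGraph

variable {n k m i : ℕ} {ε : ℝ} {w : Fin n → Fin n → ℝ}

/-- The `i`-th block of `k` consecutive vertices, `i * k ≤ u < (i + 1) * k`; the last block is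
shorter when `k` does not divide `n`. -/
def block (n k i : ℕ) : Finset (Fin n) := {u | u.val / k = i}

/-- The disjoint union of the cliques on the blocks of `k` consecutive vertices. -/
def clusterGraph (n k : ℕ) : SimpleGraph (Fin n) where
  Adj u v := u ≠ v ∧ u.val / k = v.val / k
  symm := ⟨fun _ _ h => ⟨h.1.symm, h.2.symm⟩⟩
  loopless := ⟨fun _ h => h.1 rfl⟩

@[simp]
lemma mem_block {u : Fin n} : u ∈ block n k i ↔ u.val / k = i := by
  simp [block]

lemma card_block (hk : 0 < k) (hi : (i + 1) * k ≤ n) : #(block n k i) = k := by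
  have hmap : (block n k i).map Fin.valEmbedding = Ico (i * k) ((i + 1) * k) := by
    ext x
    have hdiv : i * k ≤ x ∧ x < (i + 1) * k ↔ x / k = i := by
      rw [Nat.div_eq_iff hk, add_one_mul]
      omega
    simp only [mem_map, mem_block, Fin.valEmbedding_apply, mem_Ico, hdiv]
    refine ⟨fun ⟨_, hu, hux⟩ => hux ▸ hu, fun hx => ⟨⟨x, ?_⟩, hx, rfl⟩⟩
    exact (hdiv.mpr hx).2.trans_le hi
  rw [← card_map Fin.valEmbedding, hmap, Nat.card_Ico, add_one_mul, Nat.add_sub_cancel_left]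

lemma block_union_block (n m i : ℕ) :
    block n m (2 * i) ∪ block n m (2 * i + 1) = block n (2 * m) i := by
  ext u
  simp only [mem_union, mem_block, mul_comm 2 m, ← Nat.div_div_eq_div_mul]
  omega

lemma block_subset_left (n m i : ℕ) : block n m (2 * i) ⊆ block n (2 * m) i :=
  block_union_block n m i ▸ subset_union_left

lemma block_subset_right (n m i : ℕ) : block n m (2 * i + 1) ⊆ block n (2 * m) i :=
  block_union_block n m i ▸ subset_union_right

lemma lt_of_mem_block {i j : ℕ} (hij : i < j) {u v : Fin n} (hu : u ∈ block n k i)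
    (hv : v ∈ block n k j) : u < v := by
  rw [mem_block] at hu hv
  exact Nat.lt_of_div_lt_div (hu.trans_lt (hij.trans_eq hv.symm))

lemma cutSize_clusterGraph_le_card_sq {S : Finset (Fin n)} (hS : S ⊆ block n k i) :
    cutSize (clusterGraph n k) S ≤ #(block n k i) ^ 2 := by
  rw [sq, ← card_product]
  refine card_le_card fun p hp => ?_
  obtain ⟨hp₁, -, -, hdiv⟩ := (mem_filter.mp hp).2
  have := mem_block.mp (hS hp₁)
  exact mem_product.mpr ⟨hS hp₁, mem_block.mpr (hdiv ▸ this)⟩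

lemma cutSize_clusterGraph_block (n k i : ℕ) :
    cutSize (clusterGraph n k) (block n k i) = 0 := by
  refine card_eq_zero.mpr (filter_eq_empty_iff.mpr ?_)
  rintro p - ⟨hp₁, hp₂, -, hdiv⟩
  exact hp₂ (mem_block.mpr (hdiv ▸ mem_block.mp hp₁))

lemma clusterGraph_adj_of_mem_block {u v : Fin n} (hu : u ∈ block n m (2 * i))
    (hv : v ∈ block n m (2 * i + 1)) : (clusterGraph n (2 * m)).Adj u v := by
  refine ⟨(lt_of_mem_block (Nat.lt_succ_self _) hu hv).ne, ?_⟩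
  rw [mem_block.mp (block_subset_left n m i hu), mem_block.mp (block_subset_right n m i hv)]

/-- The pairs of vertices of positive weight that join the two halves of the `i`-th clique of
`clusterGraph n (2 * m)`. -/
noncomputable def positiveCrossPairs (w : Fin n → Fin n → ℝ) (m i : ℕ) : Finset (Fin n × Fin n) :=
  {p ∈ block n m (2 * i) ×ˢ block n m (2 * i + 1) | 0 < w p.1 p.2}

lemma positiveCrossPairs_subset (w : Fin n → Fin n → ℝ) (m i : ℕ) :
    positiveCrossPairs w m i ⊆ {p ∈ positiveEdges w | p.1.val / (2 * m) = i} := by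
  intro p hp
  obtain ⟨hp, hpos⟩ := mem_filter.mp hp
  obtain ⟨hp₁, hp₂⟩ := mem_product.mp hp
  simp only [positiveEdges, mem_filter, mem_univ, true_and]
  exact ⟨⟨lt_of_mem_block (Nat.lt_succ_self _) hp₁ hp₂, hpos⟩,
    mem_block.mp (block_subset_left n m i hp₁)⟩

lemma sum_card_positiveCrossPairs_le (w : Fin n → Fin n → ℝ) (m : ℕ) (s : Finset ℕ) :
    ∑ i ∈ s, #(positiveCrossPairs w m i) ≤ #(positiveEdges w) :=
  calc ∑ i ∈ s, #(positiveCrossPairs w m i)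
      ≤ ∑ i ∈ s, #{p ∈ positiveEdges w | p.1.val / (2 * m) = i} :=
        sum_le_sum fun i _ => card_le_card (positiveCrossPairs_subset w m i)
    _ = #{p ∈ positiveEdges w | p.1.val / (2 * m) ∈ s} := sum_card_fiberwise_eq_card_filter _ _ _
    _ ≤ #(positiveEdges w) := card_filter_le _ _

namespace IsCutSparsifier

lemma card_positiveCrossPairs_one (h : IsCutSparsifier ε (clusterGraph n (2 * 1)) w) (hε : 0 ≤ ε)
    (hw : ∀ u v, w u v = w v u) (hi : (i + 1) * (2 * 1) ≤ n) :
    #(positiveCrossPairs w 1 i) = 1 := by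
  obtain ⟨a, ha⟩ := card_eq_one.mp (card_block (n := n) (i := 2 * i) one_pos (by omega))
  obtain ⟨b, hb⟩ := card_eq_one.mp (card_block (n := n) (i := 2 * i + 1) one_pos (by omega))
  have hadj : (clusterGraph n (2 * 1)).Adj a b :=
    clusterGraph_adj_of_mem_block (i := i) (by simp [ha]) (by simp [hb])
  have hpair : {a, b} = block n (2 * 1) i := by rw [← block_union_block, ha, hb, insert_eq]
  have hpos : 0 < w a b := h.pos_of_adj_of_cutSize_pair_eq_zero hε hw hadj
    (hpair ▸ cutSize_clusterGraph_block n (2 * 1) i)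
  rw [positiveCrossPairs, ha, hb, singleton_product_singleton, filter_singleton, if_pos hpos,
    card_singleton]

lemma sq_le_two_mul_card_positiveCrossPairs (h : IsCutSparsifier ε (clusterGraph n (2 * m)) w)
    (hε : 0 ≤ ε) (hw : ∀ u v, w u v = w v u) (hm : 0 < m) (hεm : 100 * ε * √m ≤ 1)
    (hi : (i + 1) * (2 * m) ≤ n) :
    (m : ℝ) ^ 2 ≤ 2 * #(positiveCrossPairs w m i) := by
  set L := block n m (2 * i) with hL
  set R := block n m (2 * i + 1) with hR
  have hcardL : #L = m := card_block hm (by linarith)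
  have hcardR : #R = m := card_block hm (by linarith)
  have hcut : ∀ S ⊆ L ∪ R, (cutSize (clusterGraph n (2 * m)) S : ℝ) ≤ (2 * m) ^ 2 := by
    intro S hS
    rw [hL, hR, block_union_block] at hS
    have := cutSize_clusterGraph_le_card_sq hS
    rw [card_block (by omega) hi] at this
    exact_mod_cast this
  have hdisj : Disjoint L R := disjoint_left.mpr fun u huL huR =>
    (lt_of_mem_block (Nat.lt_succ_self _) huL huR).false
  have hnonpos := h.card_nonpos_le hε hw hdisj
    (fun u hu v hv => clusterGraph_adj_of_mem_block hu hv) hcut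
  have htotal : (#(positiveCrossPairs w m i) + #{p ∈ L ×ˢ R | w p.1 p.2 ≤ 0} : ℝ) = m ^ 2 := by
    have := card_filter_add_card_filter_not (s := L ×ˢ R) fun p => 0 < w p.1 p.2
    simp only [not_lt, card_product, hcardL, hcardR, ← sq] at this
    exact_mod_cast this
  rw [hcardR] at hnonpos
  linarith [mul_le_mul_of_nonneg_left hεm (sq_nonneg (m : ℝ))]

theorem mul_sq_le_two_mul_card_positiveEdges (h : IsCutSparsifier ε (clusterGraph n (2 * m)) w)
    (hε : 0 ≤ ε) (hw : ∀ u v, w u v = w v u) (hm : 0 < m) (hεm : m = 1 ∨ 100 * ε * √m ≤ 1) :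
    (n / (2 * m) : ℕ) * (m : ℝ) ^ 2 ≤ 2 * #(positiveEdges w) := by
  have hclique : ∀ i ∈ range (n / (2 * m)), (m : ℝ) ^ 2 ≤ 2 * #(positiveCrossPairs w m i) := by
    intro i hi
    have hi : (i + 1) * (2 * m) ≤ n :=
      (Nat.le_div_iff_mul_le (by omega)).mp (mem_range.mp hi)
    obtain rfl | hεm := hεm
    · rw [h.card_positiveCrossPairs_one hε hw hi]
      norm_num
    · exact h.sq_le_two_mul_card_positiveCrossPairs hε hw hm hεm hi
  calc (n / (2 * m) : ℕ) * (m : ℝ) ^ 2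
      = ∑ _i ∈ range (n / (2 * m)), (m : ℝ) ^ 2 := by
        rw [sum_const, card_range, nsmul_eq_mul]
    _ ≤ ∑ i ∈ range (n / (2 * m)), 2 * (#(positiveCrossPairs w m i) : ℝ) := sum_le_sum hclique
    _ ≤ 2 * #(positiveEdges w) := by
        rw [← mul_sum]
        gcongr
        exact_mod_cast sum_card_positiveCrossPairs_le w m _

end IsCutSparsifier

end ClusterGraph

section Parameters

lemma one_div_sq_lt_of_one_div_sqrt_lt {x ε : ℝ} (hx : 0 < x) (h : 1 / √x < ε) :
    1 / ε ^ 2 < x := by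
  have hε : 0 < ε := lt_trans (by positivity) h
  rw [one_div_lt (by positivity) hx, ← Real.sq_sqrt hx.le, ← one_div_pow]
  gcongr

-- The witness is `1 / (100 * ε) ^ 2` rounded down, but at least `1`.
lemma exists_block_size {n : ℕ} {ε : ℝ} (hn : 2 ≤ n) (hε : 0 < ε) (hnε : 1 / ε ^ 2 < n) :
    ∃ m : ℕ, 0 < m ∧ 2 * m ≤ n ∧ (m = 1 ∨ 100 * ε * √m ≤ 1) ∧ 1 / ε ^ 2 ≤ 20000 * m := by
  have hx : 1 / ε ^ 2 = 10000 * (1 / (100 * ε) ^ 2) := by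
    field_simp
    norm_num
  set x := 1 / (100 * ε) ^ 2 with hx_def
  have hx_pos : 0 < x := by positivity
  obtain hx_lt | hx_ge := lt_or_ge x 1
  · exact ⟨1, one_pos, by omega, .inl rfl, by push_cast; linarith⟩
  have hfloor_le : (⌊x⌋₊ : ℝ) ≤ x := Nat.floor_le hx_pos.le
  have hfloor_pos : 0 < ⌊x⌋₊ := Nat.floor_pos.mpr hx_ge
  refine ⟨⌊x⌋₊, hfloor_pos, ?_, .inr ?_, ?_⟩
  · have : (2 * ⌊x⌋₊ : ℝ) ≤ n := by linarith
    exact_mod_cast this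
  · have hsqrt : √x = 1 / (100 * ε) := by
      rw [hx_def, ← one_div_pow, Real.sqrt_sq (by positivity)]
    calc 100 * ε * √⌊x⌋₊ ≤ 100 * ε * √x := by gcongr
      _ = 1 := by rw [hsqrt, mul_one_div_cancel (by positivity)]
  · have hone : (1 : ℝ) ≤ ⌊x⌋₊ := by exact_mod_cast hfloor_pos
    linarith [Nat.lt_floor_add_one x]

lemma le_two_mul_div_mul {n k : ℕ} (hk : 0 < k) (hkn : k ≤ n) : n ≤ 2 * (n / k * k) := by
  have hdiv : 1 ≤ n / k := (Nat.one_le_div_iff hk).mpr hkn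
  nlinarith [Nat.div_add_mod' n k, Nat.mod_lt n hk]

end Parameters

theorem stmt_1_general :
    ∃ c : ℝ, 0 < c ∧
      ∀ (n : ℕ), 2 ≤ n → ∀ ε : ℝ, 1 / √n < ε →
      ∃ G : SimpleGraph (Fin n),
        ∀ w : Fin n → Fin n → ℝ, (∀ u v, w u v = w v u) → IsCutSparsifier ε G w →
          c * n / ε ^ 2 ≤ #(positiveEdges w) := by
  refine ⟨1 / 160000, by norm_num, fun n hn ε hnε => ?_⟩
  have hn_pos : (0 : ℝ) < n := by positivity
  have hε : 0 < ε := lt_trans (by positivity) hnε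
  obtain ⟨m, hm, hmn, hεm, hm_ge⟩ :=
    exists_block_size hn hε (one_div_sq_lt_of_one_div_sqrt_lt hn_pos hnε)
  refine ⟨clusterGraph n (2 * m), fun w hw h => ?_⟩
  have hblocks : (n : ℝ) ≤ 2 * ((n / (2 * m) : ℕ) * (2 * m)) :=
    mod_cast le_two_mul_div_mul (by omega : 0 < 2 * m) hmn
  calc 1 / 160000 * (n : ℝ) / ε ^ 2 = 1 / 160000 * n * (1 / ε ^ 2) := by ring
    _ ≤ 1 / 160000 * (2 * (((n / (2 * m) : ℕ) : ℝ) * (2 * m))) * (20000 * m) := by gcongr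
    _ = ((n / (2 * m) : ℕ) : ℝ) * m ^ 2 / 2 := by ring
    _ ≤ #(positiveEdges w) := by
        linarith [h.mul_sq_le_two_mul_card_positiveEdges hε.le hw hm hεm]

theorem stmt_1 :
    ∃ c : ℝ, 0 < c ∧
      ∀ (n : ℕ), 2 ≤ n → ∀ ε : ℝ, 1 / Real.sqrt n < ε → ε < 1 →
      ∃ G : SimpleGraph (Fin n),
        ∀ w : Fin n → Fin n → ℝ,
          (∀ u v, w u v = w v u) → (∀ u v, 0 ≤ w u v) → (∀ u, w u u = 0) →
          (∀ S : Finset (Fin n),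
              (cutSize G S : ℝ) / (1 + ε) ≤ cutW w S ∧
                cutW w S ≤ (1 + ε) * (cutSize G S : ℝ)) →
          c * n / ε ^ 2 ≤
            ((Finset.univ.filter
                (fun p : Fin n × Fin n => p.1 < p.2 ∧ 0 < w p.1 p.2)).card : ℝ) :=
  let ⟨c, hc, h⟩ := stmt_1_general
  ⟨c, hc, fun n hn ε hε _ => (h n hn ε hε).imp fun _ hG w hw _ _ hcut => hG w hw hcut⟩
end

section
/- Let c = 10⁻³ and let ε ∈ (0, c/10] be such that k := 1/ε², k/2, and c/ε are positive integers, and let n be a positive even integer. Consider the distribution ν on inputs (s₁,...,s_{n/2}, i, t), where each s_j ∈ {0,1}^k and t ∈ {0,1}^k have Hamming weight exactly k/2 and i ∈ {1,...,n/2}, defined as follows: i is uniform; with probability 1/2 the pair (s_i, t) is uniform among pairs of weight-k/2 strings with Hamming distance Δ(s_i,t) ≥ k/2 + c/ε and with probability 1/2 it is uniform among pairs with Δ(s_i,t) ≤ k/2 − c/ε; and the strings s_j for j ≠ i are independent and uniform among weight-k/2 strings. Suppose there is a one-way protocol with a finite shared-randomness space (R, ρ): Alice computes a message M = A(s₁,...,s_{n/2},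 r) ∈ {0,1}^m and Bob outputs B(M, i, t, r) ∈ {0,1}, such that with probability at least 2/3 (over ν and ρ) Bob's output equals the indicator of the event Δ(s_i, t) ≥ k/2 + c/ε. Then m ≥ c'·n/ε² for an absolute constant c' > 0. -/
open scoped Classical

/-- Hamming weight of a bit string. -/
noncomputable def hamWt {k : ℕ} (a : Fin k → Bool) : ℕ :=
  (Finset.univ.filter (fun j => a j = true)).card

/-- Hamming distance between two bit strings. -/
noncomputable def hamDist {k : ℕ} (a b : Fin k → Bool) : ℕ :=
  (Finset.univ.filter (fun j => a j ≠ b j)).card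

/-- Pairs of weight-`khalf` strings at Hamming distance at least `khalf + d`. -/
noncomputable def farPairs (k khalf d : ℕ) : Finset ((Fin k → Bool) × (Fin k → Bool)) :=
  Finset.univ.filter (fun p => hamWt p.1 = khalf ∧ hamWt p.2 = khalf ∧
    khalf + d ≤ hamDist p.1 p.2)

/-- Pairs of weight-`khalf` strings at Hamming distance at most `khalf - d`. -/
noncomputable def closePairs (k khalf d : ℕ) : Finset ((Fin k → Bool) × (Fin k → Bool)) :=
  Finset.univ.filter (fun p => hamWt p.1 = khalf ∧ hamWt p.2 = khalf ∧
    hamDist p.1 p.2 + d ≤ khalf)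

/-- Strings of Hamming weight exactly `khalf`. -/
noncomputable def wtStrings (k khalf : ℕ) : Finset (Fin k → Bool) :=
  Finset.univ.filter (fun a => hamWt a = khalf)

/-- The input distribution ν: the index `i` is uniform in `Fin N`; the pair `(s i, t)` is,
with probability 1/2, uniform among far pairs and, with probability 1/2, uniform among
close pairs; the remaining strings `s j` (`j ≠ i`) are independent and uniform among
weight-`khalf` strings. -/
noncomputable def nuDist (k khalf d N : ℕ)
    (s : Fin N → Fin k → Bool) (i : Fin N) (t : Fin k → Bool) : ℝ :=
  (1 / (N : ℝ)) *
    ((1 / 2) * (if (s i, t) ∈ farPairs k khalf d then (1 : ℝ) else 0) /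
        ((farPairs k khalf d).card : ℝ) +
      (1 / 2) * (if (s i, t) ∈ closePairs k khalf d then (1 : ℝ) else 0) /
        ((closePairs k khalf d).card : ℝ)) *
    ∏ j ∈ Finset.univ.filter (fun j => j ≠ i),
      (if hamWt (s j) = khalf then (1 : ℝ) / ((wtStrings k khalf).card : ℝ) else 0)


/-!
Write bits as signs, so that a string of weight `k / 2` becomes a vector with coordinate sum zero
and `t` is far from (close to) `s` when `⟨s, t⟩ ≤ -2d` (when `⟨s, t⟩ ≥ 2d`). Here `d` is at most
`√k / 1000`, so almost all pairs of balanced strings are far or close, and the distribution `ν` is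
almost uniform.

Fix an index and a message. Bob's answers form one sign vector `b` indexed by the balanced
strings `t`, and for Alice's string `x` the right answers form the vector
`F x t = sign ⟨x, t⟩`, cut off to `0` below the threshold. If `⟨x, y⟩ = 0`, a permutation of the
coordinates fixes `x` and complements `y`, so `F x` and `F y` are orthogonal; if `⟨x, y⟩` is merely
small compared with `k`, they are nearly orthogonal, because `y` is close to a string orthogonal
to `x`. Since almost all pairs are of this kind, Cauchy–Schwarz shows that `b` correlates with `F x`
only for an `exp (-Ω(k))` fraction of the `x`. Hence the success rate on coordinate `i`, as a
function of the random string `s i`, has an exponential moment of parameter `l = Ω(k)` as small as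
if it never exceeded `31 / 50`.

For a fixed message the coordinates are independent and these moments multiply. A protocol with
average success `33 / 50` must therefore pay for the excess with the number of messages, which
is at least `exp ((33 / 50 - 31 / 50) * l * N)`.
-/

section

open Finset

section Signs

variable {ι : Type*} [Fintype ι]

/-- The sign `(-1) ^ b` of a bit. -/
noncomputable def bitSign (b : Bool) : ℝ := if b then -1 else 1

/-- The inner product of two bit strings written as `±1` vectors. -/
noncomputable def signInner (s t : ι → Bool) : ℝ := ∑ j, bitSign (s j) * bitSign (t j)

lemma bitSign_not (b : Bool) : bitSign (!b) = -bitSign b := by cases b <;> simp [bitSign]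

lemma bitSign_mul_self (b : Bool) : bitSign b * bitSign b = 1 := by cases b <;> simp [bitSign]

lemma abs_bitSign (b : Bool) : |bitSign b| = 1 := by cases b <;> simp [bitSign]

lemma signInner_comm (s t : ι → Bool) : signInner s t = signInner t s :=
  sum_congr rfl fun _ _ ↦ mul_comm _ _

lemma signInner_not_left (s t : ι → Bool) : signInner (fun j ↦ !s j) t = -signInner s t := by
  simp [signInner, bitSign_not]

lemma signInner_comp_perm (s t : ι → Bool) (π : Equiv.Perm ι) :
    signInner (s ∘ π) (t ∘ π) = signInner s t :=
  Equiv.sum_comp π fun j ↦ bitSign (s j) * bitSign (t j)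

lemma four_mul_card_filter_eq_and_eq (s t : ι → Bool) (a b : Bool) :
    4 * (#{j | s j = a ∧ t j = b} : ℝ) =
      Fintype.card ι + bitSign a * ∑ j, bitSign (s j) + bitSign b * ∑ j, bitSign (t j) +
        bitSign a * bitSign b * signInner s t := by
  have pointwise : ∀ j, 4 * (if s j = a ∧ t j = b then (1 : ℝ) else 0) =
      1 + bitSign a * bitSign (s j) + bitSign b * bitSign (t j) +
        bitSign a * bitSign b * (bitSign (s j) * bitSign (t j)) := by
    intro j
    cases s j <;> cases t j <;> cases a <;> cases b <;> norm_num [bitSign]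
  rw [← sum_boole, mul_sum, sum_congr rfl fun j _ ↦ pointwise j]
  simp only [sum_add_distrib, ← mul_sum, signInner, sum_const, card_univ, nsmul_eq_mul, mul_one]

lemma exists_perm_comp_eq_self_and_comp_eq_not {s t : ι → Bool} (ht : ∑ j, bitSign (t j) = 0)
    (hst : signInner s t = 0) :
    ∃ π : Equiv.Perm ι, s ∘ π = s ∧ t ∘ π = fun j ↦ !t j := by
  have card_fiber (a b : Bool) : #{j | s j = a ∧ t j = b} = #{j | s j = a ∧ t j = !b} := by
    have h := four_mul_card_filter_eq_and_eq s t a b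
    have h' := four_mul_card_filter_eq_and_eq s t a (!b)
    rw [ht, hst] at h h'
    have : (#{j | s j = a ∧ t j = b} : ℝ) = #{j | s j = a ∧ t j = !b} := by linarith
    exact_mod_cast this
  have fiberEquiv (c : Bool × Bool) :
      Nonempty ({j // (s j, !t j) = c} ≃ {j // (s j, t j) = c}) := by
    rw [← Fintype.card_eq, Fintype.card_subtype, Fintype.card_subtype]
    simpa only [Prod.ext_iff, Bool.not_eq_eq_eq_not] using (card_fiber c.1 c.2).symm
  let e := fun c ↦ (fiberEquiv c).some
  have map_e (j : ι) : (s (Equiv.ofFiberEquiv e j), t (Equiv.ofFiberEquiv e j)) = (s j, !t j) :=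
    Equiv.ofFiberEquiv_map e j
  exact ⟨Equiv.ofFiberEquiv e, funext fun j ↦ (Prod.ext_iff.1 (map_e j)).1,
    funext fun j ↦ (Prod.ext_iff.1 (map_e j)).2⟩

lemma exists_agreement_sets {q : ℕ} (hq : Fintype.card ι = 4 * q) {s t : ι → Bool}
    (hs : ∑ j, bitSign (s j) = 0) (ht : ∑ j, bitSign (t j) = 0) (hst : 0 ≤ signInner s t) :
    ∃ (r : ℕ) (P : Bool → Finset ι), signInner s t = 4 * r ∧
      ∀ a, #(P a) = r ∧ ∀ j ∈ P a, s j = a ∧ t j = a := by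
  have card_agree (a : Bool) : 4 * (#{j | s j = a ∧ t j = a} : ℝ) = 4 * q + signInner s t := by
    rw [four_mul_card_filter_eq_and_eq, hs, ht, hq, bitSign_mul_self]
    push_cast
    ring
  obtain ⟨r, hr⟩ : ∃ r, #{j | s j = true ∧ t j = true} = q + r := by
    refine Nat.exists_eq_add_of_le ?_
    have : (q : ℝ) ≤ #{j | s j = true ∧ t j = true} := by linarith [card_agree true]
    exact_mod_cast this
  have inner_eq : signInner s t = 4 * r := by
    have h := card_agree true
    rw [hr] at h
    push_cast at h
    linarith
  have exists_subset (a : Bool) : ∃ P ⊆ ({j | s j = a ∧ t j = a} : Finset ι), #P = r := by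
    refine exists_subset_card_eq ?_
    have : (r : ℝ) ≤ #{j | s j = a ∧ t j = a} := by
      linarith [card_agree a, (Nat.cast_nonneg q : (0 : ℝ) ≤ q)]
    exact_mod_cast this
  choose P hP cardP using exists_subset
  exact ⟨r, P, inner_eq, fun a ↦ ⟨cardP a, fun j hj ↦ by simpa using hP a hj⟩⟩

/- With `⟨s, t⟩ = 4r`, flipping `t` on `r` of the positions where both strings are `1` and on `r`
of those where both are `0` removes the correlation and keeps `t` balanced. -/
lemma exists_signInner_eq_zero_of_nonneg {q : ℕ} (hq : Fintype.card ι = 4 * q) {s t : ι → Bool}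
    (hs : ∑ j, bitSign (s j) = 0) (ht : ∑ j, bitSign (t j) = 0) (hst : 0 ≤ signInner s t) :
    ∃ t' : ι → Bool, ∑ j, bitSign (t' j) = 0 ∧ signInner s t' = 0 ∧
      ∑ j, (bitSign (t j) - bitSign (t' j)) ^ 2 = 2 * signInner s t := by
  obtain ⟨r, P, inner_eq, hP⟩ := exists_agreement_sets hq hs ht hst
  have agree {a : Bool} {j : ι} (hj : j ∈ P a) : s j = a ∧ t j = a := (hP a).2 j hj
  have disjointP : Disjoint (P true) (P false) := disjoint_left.2 fun j hj hj' ↦ by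
    simpa [(agree hj).1] using (agree hj').1
  set F := P true ∪ P false with hF
  have sum_F (f : ι → ℝ) (c : Bool → ℝ) (hf : ∀ a, ∀ j ∈ P a, f j = c a) :
      ∑ j, (if j ∈ F then f j else 0) = r * (c true + c false) := by
    rw [sum_ite_mem, univ_inter, hF, sum_union disjointP, sum_congr rfl (hf true),
      sum_congr rfl (hf false), sum_const, sum_const, (hP true).1, (hP false).1]
    simp only [nsmul_eq_mul, mul_add]
  have sign_flip (j : ι) : bitSign (if j ∈ F then !t j else t j) =
      bitSign (t j) - 2 * (if j ∈ F then bitSign (t j) else 0) := by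
    split_ifs
    · rw [bitSign_not]; ring
    · ring
  refine ⟨fun j ↦ if j ∈ F then !t j else t j, ?_, ?_, ?_⟩
  · simp only [sign_flip, sum_sub_distrib, ← mul_sum, ht]
    rw [sum_F _ bitSign fun a j hj ↦ by rw [(agree hj).2]]
    simp [bitSign]
  · have sum_flip : ∑ j, bitSign (s j) * (2 * if j ∈ F then bitSign (t j) else 0) = 4 * r := by
      simp only [mul_ite, mul_zero]
      rw [sum_F _ (fun _ ↦ 2) fun a j hj ↦ by
        rw [(agree hj).1, (agree hj).2, mul_left_comm, bitSign_mul_self, mul_one]]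
      ring
    rw [signInner] at inner_eq ⊢
    simp only [sign_flip, mul_sub, sum_sub_distrib]
    rw [inner_eq, sum_flip, sub_self]
  · have sq_diff (j : ι) : (bitSign (t j) - bitSign (if j ∈ F then !t j else t j)) ^ 2 =
        if j ∈ F then 4 else 0 := by
      rw [sign_flip]
      split_ifs
      · linear_combination 4 * bitSign_mul_self (t j)
      · ring
    simp only [sq_diff]
    rw [sum_F _ (fun _ ↦ 4) fun _ _ _ ↦ rfl, inner_eq]
    ring

lemma exists_signInner_eq_zero {q : ℕ} (hq : Fintype.card ι = 4 * q) {s t : ι → Bool}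
    (hs : ∑ j, bitSign (s j) = 0) (ht : ∑ j, bitSign (t j) = 0) :
    ∃ t' : ι → Bool, ∑ j, bitSign (t' j) = 0 ∧ signInner s t' = 0 ∧
      ∑ j, (bitSign (t j) - bitSign (t' j)) ^ 2 = 2 * |signInner s t| := by
  rcases le_total 0 (signInner s t) with h | h
  · simpa only [abs_of_nonneg h] using exists_signInner_eq_zero_of_nonneg hq hs ht h
  · have hs' : ∑ j, bitSign (!s j) = 0 := by simp [bitSign_not, hs]
    have h' : 0 ≤ signInner (fun j ↦ !s j) t := by rw [signInner_not_left]; linarith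
    simpa only [signInner_not_left, neg_eq_zero, abs_of_nonpos h]
      using exists_signInner_eq_zero_of_nonneg hq hs' ht h'

variable [DecidableEq ι]

lemma sum_exp_mul_signInner_le (θ : ℝ) (s : ι → Bool) :
    ∑ x : ι → Bool, Real.exp (θ * signInner s x) ≤
      2 ^ Fintype.card ι * Real.exp (θ ^ 2 / 2 * Fintype.card ι) := by
  have sum_bit (j : ι) : ∑ b, Real.exp (θ * (bitSign (s j) * bitSign b)) = 2 * Real.cosh θ := by
    rw [Fintype.sum_bool, Real.cosh_eq]
    cases s j <;> simp [bitSign] <;> ring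
  calc ∑ x : ι → Bool, Real.exp (θ * signInner s x)
      = ∑ x : ι → Bool, ∏ j, Real.exp (θ * (bitSign (s j) * bitSign (x j))) := by
        simp only [signInner, mul_sum, Real.exp_sum]
    _ = (2 * Real.cosh θ) ^ Fintype.card ι := by
        rw [← Fintype.prod_sum fun j b ↦ Real.exp (θ * (bitSign (s j) * bitSign b)),
          prod_congr rfl fun j _ ↦ sum_bit j, prod_const, card_univ]
    _ ≤ (2 * Real.exp (θ ^ 2 / 2)) ^ Fintype.card ι := by
        gcongr
        exact Real.cosh_le_exp_half_sq θ
    _ = 2 ^ Fintype.card ι * Real.exp (θ ^ 2 / 2 * Fintype.card ι) := by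
        rw [mul_pow, ← Real.exp_nat_mul, mul_comm (Fintype.card ι : ℝ)]

/- Chernoff bound: Markov's inequality for `exp (± β ⟨s, x⟩)`. -/
lemma card_filter_lt_abs_signInner_le {β : ℝ} (hβ : 0 ≤ β) (s : ι → Bool) :
    (#{x : ι → Bool | β * Fintype.card ι < |signInner s x|} : ℝ) ≤
      2 * 2 ^ Fintype.card ι * Real.exp (-(β ^ 2 / 2 * Fintype.card ι)) := by
  set k := (Fintype.card ι : ℝ)
  have pointwise (x : ι → Bool) : (if β * k < |signInner s x| then (1 : ℝ) else 0) ≤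
      Real.exp (-(β ^ 2 * k)) *
        (Real.exp (β * signInner s x) + Real.exp (-β * signInner s x)) := by
    split_ifs with h
    · have exp_abs : Real.exp (β * |signInner s x|) ≤
          Real.exp (β * signInner s x) + Real.exp (-β * signInner s x) := by
        rcases abs_choice (signInner s x) with h | h <;> rw [h]
        · linarith [Real.exp_pos (-β * signInner s x)]
        · rw [mul_neg, ← neg_mul]; linarith [Real.exp_pos (β * signInner s x)]
      calc (1 : ℝ) ≤ Real.exp (-(β ^ 2 * k) + β * |signInner s x|) :=
            Real.one_le_exp (by nlinarith)
        _ ≤ _ := by rw [Real.exp_add]; gcongr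
    · positivity
  have mgf_neg := sum_exp_mul_signInner_le (-β) s
  rw [neg_sq] at mgf_neg
  rw [← sum_boole]
  refine (sum_le_sum fun x _ ↦ pointwise x).trans ?_
  rw [← mul_sum, sum_add_distrib]
  calc _ ≤ Real.exp (-(β ^ 2 * k)) * (2 ^ Fintype.card ι * Real.exp (β ^ 2 / 2 * k) +
        2 ^ Fintype.card ι * Real.exp (β ^ 2 / 2 * k)) := by
        gcongr
        exact sum_exp_mul_signInner_le β s
    _ = 2 * 2 ^ Fintype.card ι * (Real.exp (-(β ^ 2 * k)) * Real.exp (β ^ 2 / 2 * k)) := by ring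
    _ = _ := by rw [← Real.exp_add]; congr 2; ring

end Signs

section Threshold

/-- The sign of `x`, replaced by `0` in the window `-a < x < a`. -/
noncomputable def thresholdSign (a x : ℝ) : ℝ := if a ≤ x then 1 else if x ≤ -a then -1 else 0

variable {a x y τ : ℝ}

lemma abs_thresholdSign_le_one (a x : ℝ) : |thresholdSign a x| ≤ 1 := by
  unfold thresholdSign
  split_ifs <;> simp

lemma odd_thresholdSign (ha : 0 < a) : Function.Odd (thresholdSign a) := by
  intro x
  unfold thresholdSign
  split_ifs <;> linarith

lemma thresholdSign_eq_of_abs_sub_le (ha : 0 < a) (hx : a + τ ≤ |x|) (hxy : |x - y| ≤ τ) :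
    thresholdSign a x = thresholdSign a y := by
  have hy := abs_le.1 hxy
  unfold thresholdSign
  rcases le_abs.1 hx with h | h <;> split_ifs <;> first | rfl | linarith

lemma abs_thresholdSign_sub_le (ha : 0 < a) (hτ : 0 < τ) (x y : ℝ) :
    |thresholdSign a x - thresholdSign a y| ≤
      2 * (if |x| < a + τ then 1 else 0) + 2 / τ ^ 2 * (x - y) ^ 2 := by
  have le_two : |thresholdSign a x - thresholdSign a y| ≤ 2 := by
    linarith [abs_sub (thresholdSign a x) (thresholdSign a y), abs_thresholdSign_le_one a x,
      abs_thresholdSign_le_one a y]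
  split_ifs with hx
  · linarith [show 0 ≤ 2 / τ ^ 2 * (x - y) ^ 2 by positivity]
  rcases le_or_gt |x - y| τ with hxy | hxy
  · rw [thresholdSign_eq_of_abs_sub_le ha (not_lt.1 hx) hxy, sub_self, abs_zero]
    positivity
  · have one_le : 1 ≤ (x - y) ^ 2 / τ ^ 2 := by
      rw [one_le_div (by positivity), ← sq_abs (x - y)]
      gcongr
    linarith [show 2 / τ ^ 2 * (x - y) ^ 2 = 2 * ((x - y) ^ 2 / τ ^ 2) by ring]

end Threshold

section Slice

variable {k w : ℕ}

lemma sum_bitSign (s : Fin k → Bool) : ∑ j, bitSign (s j) = k - 2 * hamWt s := by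
  have pointwise (j : Fin k) : bitSign (s j) = 1 - 2 * if s j = true then 1 else 0 := by
    cases s j <;> norm_num [bitSign]
  rw [sum_congr rfl fun j _ ↦ pointwise j, sum_sub_distrib, ← mul_sum, sum_boole, hamWt]
  simp

lemma signInner_eq_sub_hamDist (s t : Fin k → Bool) : signInner s t = k - 2 * hamDist s t := by
  have pointwise (j : Fin k) :
      bitSign (s j) * bitSign (t j) = 1 - 2 * if s j ≠ t j then 1 else 0 := by
    cases s j <;> cases t j <;> norm_num [bitSign]
  rw [signInner, sum_congr rfl fun j _ ↦ pointwise j, sum_sub_distrib, ← mul_sum, sum_boole,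
    hamDist]
  simp

lemma mem_wtStrings {s : Fin k → Bool} :
    s ∈ wtStrings k w ↔ ∑ j, bitSign (s j) = k - 2 * w := by
  rw [wtStrings, mem_filter_univ, sum_bitSign, ← Nat.cast_inj (R := ℝ)]
  constructor <;> intro h <;> linarith

lemma mem_wtStrings_of_eq_two_mul (hk : k = 2 * w) {s : Fin k → Bool} :
    s ∈ wtStrings k w ↔ ∑ j, bitSign (s j) = 0 := by
  simp [mem_wtStrings, hk]

lemma sum_wtStrings_comp_perm (π : Equiv.Perm (Fin k)) (f : (Fin k → Bool) → ℝ) :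
    ∑ x ∈ wtStrings k w, f (x ∘ π) = ∑ x ∈ wtStrings k w, f x := by
  refine sum_equiv (π.symm.arrowCongr (Equiv.refl Bool)) (fun x ↦ ?_) fun _ _ ↦ rfl
  rw [mem_wtStrings, mem_wtStrings, ← Equiv.sum_comp π fun j ↦ bitSign (x j)]
  rfl

lemma sum_mul_eq_zero_of_signInner_eq_zero {f : ℝ → ℝ} (hf : f.Odd) (g : ℝ → ℝ)
    {s t : Fin k → Bool} (ht : ∑ j, bitSign (t j) = 0) (hst : signInner s t = 0) :
    ∑ x ∈ wtStrings k w, g (signInner s x) * f (signInner t x) = 0 := by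
  obtain ⟨π, hs, htπ⟩ := exists_perm_comp_eq_self_and_comp_eq_not ht hst
  have inner_s (x : Fin k → Bool) : signInner s (x ∘ π) = signInner s x := by
    rw [← signInner_comp_perm s x π, hs]
  have inner_t (x : Fin k → Bool) : signInner t (x ∘ π) = -signInner t x := by
    rw [← signInner_comp_perm t x π, htπ, signInner_not_left, neg_neg]
  have eq_neg := sum_wtStrings_comp_perm (w := w) π fun x ↦ g (signInner s x) * f (signInner t x)
  simp only [inner_s, inner_t, hf.eq, mul_neg, sum_neg_distrib] at eq_neg
  linarith

lemma exists_sum_bitSign_mul_eq (i : Fin k) :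
    ∃ m : ℝ, |m| ≤ #(wtStrings k w) ∧
      ∀ j ≠ i, ∑ x ∈ wtStrings k w, bitSign (x i) * bitSign (x j) = m := by
  by_cases h : ∃ l, l ≠ i
  · obtain ⟨l, hl⟩ := h
    refine ⟨∑ x ∈ wtStrings k w, bitSign (x i) * bitSign (x l), ?_, fun j hj ↦ ?_⟩
    · refine (abs_sum_le_sum_abs _ _).trans_eq ?_
      simp [abs_mul, abs_bitSign]
    · rw [← sum_wtStrings_comp_perm (Equiv.swap j l)]
      simp [Equiv.swap_apply_of_ne_of_ne hj.symm hl.symm]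
  · exact ⟨0, by simp, fun j hj ↦ (h ⟨j, hj⟩).elim⟩

/- The coordinates of a random string of fixed weight have one common pairwise correlation, so a
form with `∑ j, v j = 0` only sees their variances up to a factor `2`. -/
lemma sum_sq_sum_mul_bitSign_le {v : Fin k → ℝ} (hv : ∑ j, v j = 0) :
    ∑ x ∈ wtStrings k w, (∑ j, v j * bitSign (x j)) ^ 2 ≤
      2 * #(wtStrings k w) * ∑ j, v j ^ 2 := by
  choose m abs_m hm using exists_sum_bitSign_mul_eq (k := k) (w := w)
  set S := wtStrings k w
  have row (i : Fin k) :
      ∑ j, v j * ∑ x ∈ S, bitSign (x i) * bitSign (x j) = v i * (#S - m i) := by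
    have entry (j : Fin k) : v j * ∑ x ∈ S, bitSign (x i) * bitSign (x j) =
        m i * v j + if j = i then v i * (#S - m i) else 0 := by
      split_ifs with h
      · subst h
        simp only [bitSign_mul_self, sum_const, nsmul_eq_mul]
        ring
      · rw [hm i j h, add_zero, mul_comm]
    rw [sum_congr rfl fun j _ ↦ entry j, sum_add_distrib, ← mul_sum, hv, mul_zero, zero_add,
      Fintype.sum_ite_eq']
  calc ∑ x ∈ S, (∑ j, v j * bitSign (x j)) ^ 2
      = ∑ i, v i * ∑ j, v j * ∑ x ∈ S, bitSign (x i) * bitSign (x j) := by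
        simp only [sq, sum_mul_sum]
        rw [sum_comm]
        refine sum_congr rfl fun i _ ↦ ?_
        rw [sum_comm, mul_sum]
        refine sum_congr rfl fun j _ ↦ ?_
        simp only [mul_mul_mul_comm (v i), mul_assoc, mul_sum]
    _ = ∑ i, (#S - m i) * v i ^ 2 := sum_congr rfl fun i _ ↦ by rw [row]; ring
    _ ≤ ∑ i, 2 * #S * v i ^ 2 := by
        gcongr with i
        linarith [(abs_le.1 (abs_m i)).1]
    _ = 2 * #S * ∑ j, v j ^ 2 := by rw [mul_sum]

lemma sum_odd_signInner_eq_zero (hk : k = 2 * w) {f : ℝ → ℝ} (hf : f.Odd)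
    (t : Fin k → Bool) : ∑ x ∈ wtStrings k w, f (signInner x t) = 0 := by
  have eq_neg : ∑ x ∈ wtStrings k w, f (signInner x t) =
      ∑ x ∈ wtStrings k w, -f (signInner x t) := by
    refine sum_equiv (Equiv.arrowCongr (Equiv.refl _) Equiv.boolNot) (fun x ↦ ?_) fun x _ ↦ ?_
    · simp [mem_wtStrings_of_eq_two_mul hk, bitSign_not]
    · have h : Equiv.arrowCongr (Equiv.refl _) Equiv.boolNot x = fun j ↦ !x j := rfl
      rw [h, signInner_not_left, hf.eq, neg_neg]
  rw [sum_neg_distrib] at eq_neg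
  linarith

end Slice


section Anticoncentration

lemma sq_centralBinom_mul_le (n : ℕ) : n.centralBinom ^ 2 * (3 * n + 1) ≤ 16 ^ n := by
  induction n with
  | zero => simp
  | succ n ih =>
    have rec_sq : ((n + 1) * (n + 1).centralBinom) ^ 2 = (2 * (2 * n + 1) * n.centralBinom) ^ 2 :=
      congrArg (· ^ 2) (Nat.succ_mul_centralBinom_succ n)
    refine le_of_mul_le_mul_left ?_ (show 0 < (n + 1) ^ 2 * (3 * n + 1) by positivity)
    calc (n + 1) ^ 2 * (3 * n + 1) * ((n + 1).centralBinom ^ 2 * (3 * (n + 1) + 1))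
        = (3 * n + 1) * (3 * n + 4) * ((n + 1) * (n + 1).centralBinom) ^ 2 := by ring
      _ = 4 * (2 * n + 1) ^ 2 * (3 * n + 4) * (n.centralBinom ^ 2 * (3 * n + 1)) := by
        rw [rec_sq]; ring
      _ ≤ 4 * (2 * n + 1) ^ 2 * (3 * n + 4) * 16 ^ n := by gcongr
      _ ≤ 16 * ((n + 1) ^ 2 * (3 * n + 1)) * 16 ^ n := Nat.mul_le_mul_right _ (by nlinarith)
      _ = (n + 1) ^ 2 * (3 * n + 1) * 16 ^ (n + 1) := by ring

lemma pow_le_sq_centralBinom_mul {n : ℕ} (hn : 0 < n) : 16 ^ n ≤ n.centralBinom ^ 2 * (4 * n) := by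
  induction n, hn using Nat.le_induction with
  | base => simp [Nat.centralBinom]
  | succ n hn ih =>
    have rec_sq : ((n + 1) * (n + 1).centralBinom) ^ 2 = (2 * (2 * n + 1) * n.centralBinom) ^ 2 :=
      congrArg (· ^ 2) (Nat.succ_mul_centralBinom_succ n)
    refine le_of_mul_le_mul_left ?_ (show 0 < n * (n + 1) by positivity)
    calc n * (n + 1) * 16 ^ (n + 1) = 16 * (n * (n + 1)) * 16 ^ n := by ring
      _ ≤ 4 * (2 * n + 1) ^ 2 * (n.centralBinom ^ 2 * (4 * n)) :=
        Nat.mul_le_mul (by nlinarith) ih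
      _ = 4 * n * (2 * (2 * n + 1) * n.centralBinom) ^ 2 := by ring
      _ = n * (n + 1) * ((n + 1).centralBinom ^ 2 * (4 * (n + 1))) := by rw [← rec_sq]; ring

lemma centralBinom_pow_four_mul_le (q : ℕ) :
    q.centralBinom ^ 4 * q ≤ (2 * q).centralBinom ^ 2 := by
  rcases q.eq_zero_or_pos with rfl | hq
  · simp
  refine le_of_mul_le_mul_left ?_ (show 0 < 8 * q by positivity)
  calc 8 * q * (q.centralBinom ^ 4 * q) = q.centralBinom ^ 4 * (8 * q ^ 2) := by ring
    _ ≤ q.centralBinom ^ 4 * (3 * q + 1) ^ 2 := by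
      gcongr
      nlinarith
    _ = (q.centralBinom ^ 2 * (3 * q + 1)) ^ 2 := by ring
    _ ≤ (16 ^ q) ^ 2 := Nat.pow_le_pow_left (sq_centralBinom_mul_le q) 2
    _ = 16 ^ (2 * q) := by rw [← pow_mul, mul_comm]
    _ ≤ (2 * q).centralBinom ^ 2 * (4 * (2 * q)) := pow_le_sq_centralBinom_mul (by positivity)
    _ = 8 * q * (2 * q).centralBinom ^ 2 := by ring

variable {k w q : ℕ}

/-- The set of positions of the ones of a bit string. -/
def ones (s : Fin k → Bool) : Finset (Fin k) := {j | s j = true}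

lemma mem_ones {s : Fin k → Bool} {j : Fin k} : j ∈ ones s ↔ s j = true := mem_filter_univ _

lemma ones_injective : Function.Injective (ones (k := k)) := fun s t h ↦ funext fun j ↦
  Bool.eq_iff_iff.2 <| by rw [← mem_ones, ← mem_ones, h]

lemma mem_wtStrings_iff_card_ones {s : Fin k → Bool} : s ∈ wtStrings k w ↔ #(ones s) = w :=
  mem_filter_univ _

lemma card_wtStrings (k w : ℕ) : #(wtStrings k w) = k.choose w := by
  have image_ones : (wtStrings k w).image ones = powersetCard w univ := by
    ext A
    simp only [mem_image, mem_powersetCard_univ, mem_wtStrings_iff_card_ones]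
    refine ⟨by rintro ⟨s, hs, rfl⟩; exact hs, fun hA ↦ ?_⟩
    have ones_mem : ones (fun j ↦ decide (j ∈ A)) = A := by ext; simp [mem_ones]
    exact ⟨fun j ↦ decide (j ∈ A), by rwa [ones_mem], ones_mem⟩
  rw [← card_image_of_injective _ ones_injective, image_ones, card_powersetCard, card_univ,
    Fintype.card_fin]

lemma card_wtStrings_four_mul (q : ℕ) : #(wtStrings (4 * q) (2 * q)) = (2 * q).centralBinom := by
  rw [card_wtStrings, Nat.centralBinom, ← mul_assoc, show 2 * 2 = 4 from rfl]

lemma card_wtStrings_four_mul_pos (q : ℕ) : 0 < #(wtStrings (4 * q) (2 * q)) := by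
  rw [card_wtStrings_four_mul]
  exact Nat.centralBinom_pos _

lemma card_filter_card_inter_eq_le (s : Fin k → Bool) (w j : ℕ) :
    #{t ∈ wtStrings k w | #(ones t ∩ ones s) = j} ≤
      (#(ones s)).choose j * (k - #(ones s)).choose (w - j) := by
  have card_target : #(powersetCard j (ones s) ×ˢ powersetCard (w - j) (ones s)ᶜ) =
      (#(ones s)).choose j * (k - #(ones s)).choose (w - j) := by
    rw [card_product, card_powersetCard, card_powersetCard, card_compl, Fintype.card_fin]
  rw [← card_target]
  refine card_le_card_of_injOn (fun t ↦ (ones t ∩ ones s, ones t \ ones s)) ?_ ?_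
  · intro t ht
    obtain ⟨ht, inter_eq⟩ := mem_filter.1 ht
    have card_split := card_inter_add_card_sdiff (ones t) (ones s)
    rw [inter_eq, mem_wtStrings_iff_card_ones.1 ht] at card_split
    rw [mem_coe, mem_product, mem_powersetCard, mem_powersetCard]
    exact ⟨⟨inter_subset_right, inter_eq⟩, fun j hj ↦ mem_compl.2 (mem_sdiff.1 hj).2,
      by dsimp only; lia⟩
  · intro t _ t' _ h
    obtain ⟨inter_eq, sdiff_eq⟩ := Prod.ext_iff.1 h
    dsimp only at inter_eq sdiff_eq
    refine ones_injective ?_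
    rw [← sdiff_union_inter (ones t) (ones s), sdiff_eq, inter_eq, sdiff_union_inter]

lemma card_filter_abs_signInner_lt_le {s : Fin (4 * q) → Bool} (hs : s ∈ wtStrings (4 * q) (2 * q))
    (e : ℕ) :
    #{t ∈ wtStrings (4 * q) (2 * q) | |signInner s t| < 4 * e} ≤ 2 * e * q.centralBinom ^ 2 := by
  set S := wtStrings (4 * q) (2 * q)
  have balanced {t : Fin (4 * q) → Bool} (ht : t ∈ S) : ∑ j, bitSign (t j) = 0 :=
    (mem_wtStrings_of_eq_two_mul (by lia)).1 ht
  have card_fiber (j : ℕ) : #{t ∈ S | #(ones t ∩ ones s) = j} ≤ q.centralBinom ^ 2 := by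
    refine (card_filter_card_inter_eq_le s (2 * q) j).trans ?_
    rw [mem_wtStrings_iff_card_ones.1 hs, show 4 * q - 2 * q = 2 * q by lia, sq]
    gcongr <;> exact Nat.choose_le_centralBinom _ _
  have card_inter_mem {t : Fin (4 * q) → Bool} (ht : t ∈ S) (hst : |signInner s t| < 4 * e) :
      #(ones t ∩ ones s) ∈ Ico (q - e) (q + e) := by
    have four_mul := four_mul_card_filter_eq_and_eq t s true true
    rw [balanced hs, balanced ht, signInner_comm, bitSign_mul_self, Fintype.card_fin,
      filter_and] at four_mul
    change 4 * (#(ones t ∩ ones s) : ℝ) = _ at four_mul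
    push_cast at four_mul
    obtain ⟨lower, upper⟩ := abs_lt.1 hst
    have lower' : (q : ℝ) < #(ones t ∩ ones s) + e := by linarith
    have upper' : (#(ones t ∩ ones s) : ℝ) < q + e := by linarith
    rw [mem_Ico]
    norm_cast at lower' upper'
    lia
  calc #{t ∈ S | |signInner s t| < 4 * e}
      ≤ #((Ico (q - e) (q + e)).biUnion fun j ↦ {t ∈ S | #(ones t ∩ ones s) = j}) := by
        refine card_le_card fun t ht ↦ ?_
        obtain ⟨ht, hst⟩ := mem_filter.1 ht
        exact mem_biUnion.2 ⟨_, card_inter_mem ht hst, mem_filter.2 ⟨ht, rfl⟩⟩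
    _ ≤ #(Ico (q - e) (q + e)) * q.centralBinom ^ 2 :=
        card_biUnion_le_card_mul _ _ _ fun j _ ↦ card_fiber j
    _ ≤ 2 * e * q.centralBinom ^ 2 := by
        rw [Nat.card_Ico]
        gcongr
        lia

lemma card_filter_abs_signInner_lt_mul_sqrt_le {s : Fin (4 * q) → Bool}
    (hs : s ∈ wtStrings (4 * q) (2 * q)) {r : ℝ} (hr : 0 ≤ r) :
    #{t ∈ wtStrings (4 * q) (2 * q) | |signInner s t| < r} * √(4 * q) ≤
      (r + 4) * #(wtStrings (4 * q) (2 * q)) := by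
  set S := wtStrings (4 * q) (2 * q)
  have sqrt_mul_le : (q.centralBinom : ℝ) ^ 2 * √q ≤ #S := by
    refine le_of_sq_le_sq ?_ (by positivity)
    rw [mul_pow, ← pow_mul, Real.sq_sqrt (by positivity), card_wtStrings_four_mul]
    exact_mod_cast centralBinom_pow_four_mul_le q
  set e := ⌈r / 4⌉₊
  have le_e : r ≤ 4 * e := by linarith [Nat.le_ceil (r / 4)]
  have e_lt : 4 * (e : ℝ) < r + 4 := by linarith [Nat.ceil_lt_add_one (show 0 ≤ r / 4 by linarith)]
  have card_le : (#{t ∈ S | |signInner s t| < r} : ℝ) ≤ 2 * e * q.centralBinom ^ 2 := by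
    refine le_trans ?_ (Nat.cast_le.2 (card_filter_abs_signInner_lt_le hs e) |>.trans_eq ?_)
    · gcongr
    · push_cast; rfl
  calc #{t ∈ S | |signInner s t| < r} * √(4 * q)
      ≤ 2 * e * q.centralBinom ^ 2 * (2 * √q) := by
        rw [Real.sqrt_mul (by norm_num), show √(4 : ℝ) = 2 by rw [show (4 : ℝ) = 2 ^ 2 by norm_num,
          Real.sqrt_sq (by norm_num)]]
        gcongr
    _ = 4 * e * (q.centralBinom ^ 2 * √q) := by ring
    _ ≤ (r + 4) * #S := by gcongr

end Anticoncentration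

section Correlation

variable {q d : ℕ} {s t : Fin (4 * q) → Bool}

/- Replacing `t` by a nearby string orthogonal to `s` makes the correlation vanish; the cost is
concentrated on the `x` near the threshold and on those where the inner product moves by `τ`. -/
lemma sum_thresholdSign_mul_le {a τ : ℝ} (ha : 0 < a) (hτ : 0 < τ)
    (hs : s ∈ wtStrings (4 * q) (2 * q)) (ht : t ∈ wtStrings (4 * q) (2 * q)) :
    ∑ x ∈ wtStrings (4 * q) (2 * q),
        thresholdSign a (signInner s x) * thresholdSign a (signInner t x) ≤
      2 * #{x ∈ wtStrings (4 * q) (2 * q) | |signInner t x| < a + τ} +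
        8 / τ ^ 2 * #(wtStrings (4 * q) (2 * q)) * |signInner s t| := by
  set S := wtStrings (4 * q) (2 * q)
  rw [mem_wtStrings_of_eq_two_mul (by lia)] at hs ht
  obtain ⟨t', ht', hst', sum_sq_diff⟩ := exists_signInner_eq_zero (Fintype.card_fin _) hs ht
  have orthogonal := sum_mul_eq_zero_of_signInner_eq_zero (w := 2 * q) (odd_thresholdSign ha)
    (thresholdSign a) ht' hst'
  have inner_diff (x : Fin (4 * q) → Bool) : signInner t x - signInner t' x =
      ∑ j, (bitSign (t j) - bitSign (t' j)) * bitSign (x j) := by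
    simp only [signInner, ← sum_sub_distrib, sub_mul]
  have second_moment : ∑ x ∈ S, (signInner t x - signInner t' x) ^ 2 ≤
      2 * #S * (2 * |signInner s t|) := by
    simp only [inner_diff, ← sum_sq_diff]
    exact sum_sq_sum_mul_bitSign_le (by rw [sum_sub_distrib, ht, ht', sub_self])
  have pointwise (x : Fin (4 * q) → Bool) :
      thresholdSign a (signInner s x) * thresholdSign a (signInner t x) ≤
        thresholdSign a (signInner s x) * thresholdSign a (signInner t' x) +
          (2 * (if |signInner t x| < a + τ then 1 else 0) +
            2 / τ ^ 2 * (signInner t x - signInner t' x) ^ 2) := by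
    rw [← sub_le_iff_le_add', ← mul_sub]
    refine (le_abs_self _).trans ?_
    rw [abs_mul, ← one_mul (2 * _ + _)]
    exact mul_le_mul (abs_thresholdSign_le_one _ _) (abs_thresholdSign_sub_le ha hτ _ _)
      (abs_nonneg _) zero_le_one
  refine (sum_le_sum fun x _ ↦ pointwise x).trans ?_
  rw [sum_add_distrib, orthogonal, zero_add, sum_add_distrib, ← mul_sum, sum_boole, ← mul_sum]
  refine add_le_add_right ?_ _
  calc _ ≤ 2 / τ ^ 2 * (2 * #S * (2 * |signInner s t|)) := by gcongr
    _ = _ := by ring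

lemma thousand_mul_le_sqrt (hq : 10 ^ 6 * d ^ 2 ≤ 4 * q) : 1000 * (d : ℝ) ≤ √(4 * q) := by
  refine Real.le_sqrt_of_sq_le ?_
  rw [mul_pow]
  exact_mod_cast hq

lemma card_filter_abs_signInner_lt_add_le (hd : 0 < d) (hq : 10 ^ 6 * d ^ 2 ≤ 4 * q)
    (hs : s ∈ wtStrings (4 * q) (2 * q)) :
    #{t ∈ wtStrings (4 * q) (2 * q) | |signInner s t| < 2 * d + 2 * √(4 * q) / 1000} ≤
      (1 / 100 : ℝ) * #(wtStrings (4 * q) (2 * q)) := by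
  have one_le_d : (1 : ℝ) ≤ d := by exact_mod_cast hd
  have le_sqrt := thousand_mul_le_sqrt hq
  have mul_sqrt_le := card_filter_abs_signInner_lt_mul_sqrt_le hs
    (show 0 ≤ 2 * d + 2 * √(4 * q) / 1000 by positivity)
  refine le_of_mul_le_mul_right (mul_sqrt_le.trans ?_) (show 0 < √(4 * q) by linarith)
  rw [mul_right_comm]
  gcongr
  linarith

lemma sum_thresholdSign_mul_le_of_abs_signInner_le (hd : 0 < d) (hq : 10 ^ 6 * d ^ 2 ≤ 4 * q)
    (hs : s ∈ wtStrings (4 * q) (2 * q)) (ht : t ∈ wtStrings (4 * q) (2 * q))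
    (hst : |signInner s t| ≤ 10⁻¹ ^ 9 * (4 * q)) :
    ∑ x ∈ wtStrings (4 * q) (2 * q),
        thresholdSign (2 * d) (signInner s x) * thresholdSign (2 * d) (signInner t x) ≤
      (3 / 100 : ℝ) * #(wtStrings (4 * q) (2 * q)) := by
  have d_pos : (0 : ℝ) < d := by exact_mod_cast hd
  have sqrt_pos : 0 < √(4 * q) := by linarith [thousand_mul_le_sqrt hq]
  have q_pos : (0 : ℝ) < q := by linarith [Real.sqrt_pos.1 sqrt_pos]
  refine (sum_thresholdSign_mul_le (a := 2 * d) (τ := 2 * √(4 * q) / 1000) (by positivity)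
    (by positivity) hs ht).trans ?_
  have moved : 8 / (2 * √(4 * q) / 1000) ^ 2 * #(wtStrings (4 * q) (2 * q)) * |signInner s t| ≤
      8 / (4 * (4 * q) / 10 ^ 6) * #(wtStrings (4 * q) (2 * q)) * (10⁻¹ ^ 9 * (4 * q)) := by
    rw [div_pow, mul_pow, Real.sq_sqrt (by positivity)]
    gcongr <;> norm_num
  have simplify : 8 / (4 * (4 * q) / 10 ^ 6) * #(wtStrings (4 * q) (2 * q)) *
      (10⁻¹ ^ 9 * (4 * q)) = (1 / 500 : ℝ) * #(wtStrings (4 * q) (2 * q)) := by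
    field_simp
    ring
  linarith [card_filter_abs_signInner_lt_add_le hd hq ht,
    (Nat.cast_nonneg _ : (0 : ℝ) ≤ #(wtStrings (4 * q) (2 * q)))]

lemma sum_sum_thresholdSign_mul_le (hd : 0 < d) (hq : 10 ^ 6 * d ^ 2 ≤ 4 * q)
    {G : Finset (Fin (4 * q) → Bool)} (hG : G ⊆ wtStrings (4 * q) (2 * q))
    {x : Fin (4 * q) → Bool} (hx : x ∈ wtStrings (4 * q) (2 * q)) :
    ∑ y ∈ G, ∑ t ∈ wtStrings (4 * q) (2 * q),
        thresholdSign (2 * d) (signInner x t) * thresholdSign (2 * d) (signInner y t) ≤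
      #(wtStrings (4 * q) (2 * q)) * (3 / 100 * #G +
        2 * 2 ^ (4 * q) * Real.exp (-((10⁻¹ ^ 9) ^ 2 / 2 * (4 * q)))) := by
  set S := wtStrings (4 * q) (2 * q)
  set F := fun x t : Fin (4 * q) → Bool ↦ thresholdSign (2 * d) (signInner x t)
  have F_mul_F_le (y t) : F x t * F y t ≤ 1 := by
    refine (le_abs_self _).trans ?_
    rw [abs_mul]
    exact mul_le_one₀ (abs_thresholdSign_le_one _ _) (abs_nonneg _) (abs_thresholdSign_le_one _ _)
  have entry (y) (hy : y ∈ G) : ∑ t ∈ S, F x t * F y t ≤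
      #S * (3 / 100 + if 10⁻¹ ^ 9 * (4 * q) < |signInner x y| then 1 else 0) := by
    split_ifs with h
    · refine (sum_le_sum fun t _ ↦ F_mul_F_le y t).trans ?_
      rw [sum_const, nsmul_one]
      linarith [(Nat.cast_nonneg _ : (0 : ℝ) ≤ #S)]
    · rw [add_zero, mul_comm (#S : ℝ)]
      exact sum_thresholdSign_mul_le_of_abs_signInner_le hd hq hx (hG hy) (not_lt.1 h)
  have card_far := card_filter_lt_abs_signInner_le (β := 10⁻¹ ^ 9) (by positivity) x
  rw [Fintype.card_fin] at card_far
  push_cast at card_far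
  refine (sum_le_sum entry).trans ?_
  rw [← mul_sum, sum_add_distrib, sum_const, nsmul_eq_mul, mul_comm (#G : ℝ), sum_boole]
  gcongr
  refine le_trans ?_ card_far
  gcongr
  exact subset_univ _

lemma sq_mul_card_le_of_correlation {X T : Type*} {G : Finset X} {S : Finset T} {F : X → T → ℝ}
    {σ : T → ℝ} {α Λ : ℝ} (hα : 0 ≤ α) (hσ : ∀ t, |σ t| ≤ 1)
    (corr : ∀ x ∈ G, α ≤ ∑ t ∈ S, σ t * F x t)
    (gram : ∀ x ∈ G, ∑ y ∈ G, ∑ t ∈ S, F x t * F y t ≤ Λ) :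
    (α * #G) ^ 2 ≤ #S * (#G * Λ) := by
  have lower : α * #G ≤ ∑ t ∈ S, σ t * ∑ x ∈ G, F x t := by
    calc α * #G = ∑ _ ∈ G, α := by rw [sum_const, nsmul_eq_mul, mul_comm]
      _ ≤ ∑ x ∈ G, ∑ t ∈ S, σ t * F x t := sum_le_sum corr
      _ = _ := by rw [sum_comm]; simp only [mul_sum]
  have sum_sq_sigma : ∑ t ∈ S, σ t ^ 2 ≤ #S := by
    rw [← nsmul_one, ← sum_const]
    gcongr with t
    exact sq_le_one_iff_abs_le_one _ |>.2 (hσ t)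
  have sum_sq_row : ∑ t ∈ S, (∑ x ∈ G, F x t) ^ 2 ≤ #G * Λ := by
    calc ∑ t ∈ S, (∑ x ∈ G, F x t) ^ 2
        = ∑ x ∈ G, ∑ y ∈ G, ∑ t ∈ S, F x t * F y t := by
          simp only [sq, sum_mul_sum]
          rw [sum_comm]
          exact sum_congr rfl fun x _ ↦ sum_comm
      _ ≤ ∑ _ ∈ G, Λ := sum_le_sum gram
      _ = #G * Λ := by rw [sum_const, nsmul_eq_mul]
  calc (α * #G) ^ 2 ≤ (∑ t ∈ S, σ t * ∑ x ∈ G, F x t) ^ 2 := by gcongr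
    _ ≤ (∑ t ∈ S, σ t ^ 2) * ∑ t ∈ S, (∑ x ∈ G, F x t) ^ 2 := sum_mul_sq_le_sq_mul_sq _ _ _
    _ ≤ #S * (#G * Λ) := by gcongr

end Correlation

section Concentration

variable {k w : ℕ} {a : ℝ} {b : (Fin k → Bool) → Bool}

/-- The number of balanced strings `t` on whose distance to `x` the guess `b t` is right, where
`true` claims that `t` is far from `x`, that is `⟨x, t⟩ ≤ -a`, and `false` that `t` is close to
`x`, that is `a ≤ ⟨x, t⟩`. No guess is right if `|⟨x, t⟩| < a`. -/
noncomputable def correctCount (k w : ℕ) (a : ℝ) (b : (Fin k → Bool) → Bool)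
    (x : Fin k → Bool) : ℕ :=
  #{t ∈ wtStrings k w | thresholdSign a (signInner x t) = bitSign (b t)}

lemma correctCount_le_card (x : Fin k → Bool) : correctCount k w a b x ≤ #(wtStrings k w) :=
  card_filter_le _ _

lemma two_mul_correctCount_le (x : Fin k → Bool) :
    2 * (correctCount k w a b x : ℝ) ≤ #(wtStrings k w) +
      ∑ t ∈ wtStrings k w, bitSign (b t) * thresholdSign a (signInner x t) := by
  have pointwise (t : Fin k → Bool) :
      2 * (if thresholdSign a (signInner x t) = bitSign (b t) then (1 : ℝ) else 0) ≤
        1 + bitSign (b t) * thresholdSign a (signInner x t) := by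
    split_ifs with h
    · rw [h, bitSign_mul_self]; norm_num
    · have abs_mul_le : |bitSign (b t) * thresholdSign a (signInner x t)| ≤ 1 := by
        rw [abs_mul, abs_bitSign, one_mul]
        exact abs_thresholdSign_le_one _ _
      linarith [(abs_le.1 abs_mul_le).1]
  rw [correctCount, ← sum_boole, mul_sum]
  refine (sum_le_sum fun t _ ↦ pointwise t).trans_eq ?_
  rw [sum_add_distrib, sum_const, nsmul_one]

lemma two_mul_sum_correctCount_le (hk : k = 2 * w) (ha : 0 < a) :
    2 * ∑ x ∈ wtStrings k w, (correctCount k w a b x : ℝ) ≤ (#(wtStrings k w) : ℝ) ^ 2 := by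
  rw [mul_sum]
  refine (sum_le_sum fun x _ ↦ two_mul_correctCount_le x).trans_eq ?_
  rw [sum_add_distrib, sum_comm]
  simp only [← mul_sum, sum_odd_signInner_eq_zero hk (odd_thresholdSign ha), mul_zero,
    sum_const_zero, sum_const, nsmul_eq_mul, add_zero, sq]

lemma card_filter_lt_correctCount_le {q d : ℕ} (hd : 0 < d) (hq : 10 ^ 6 * d ^ 2 ≤ 4 * q)
    (b : (Fin (4 * q) → Bool) → Bool) :
    (#{x ∈ wtStrings (4 * q) (2 * q) | 3 / 5 * (#(wtStrings (4 * q) (2 * q)) : ℝ) <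
      correctCount (4 * q) (2 * q) (2 * d) b x} : ℝ) ≤
      200 * 2 ^ (4 * q) * Real.exp (-((10⁻¹ ^ 9) ^ 2 / 2 * (4 * q))) := by
  set S := wtStrings (4 * q) (2 * q)
  set G := {x ∈ S | 3 / 5 * (#S : ℝ) < correctCount (4 * q) (2 * q) (2 * d) b x}
  have G_subset : G ⊆ S := filter_subset _ _
  have corr (x) (hx : x ∈ G) : 1 / 5 * (#S : ℝ) ≤
      ∑ t ∈ S, bitSign (b t) * thresholdSign (2 * d) (signInner x t) := by
    linarith [(mem_filter.1 hx).2, two_mul_correctCount_le (w := 2 * q) (a := 2 * d) (b := b) x]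
  have sq_le := sq_mul_card_le_of_correlation (by positivity) (fun t ↦ (abs_bitSign _).le) corr
    fun x hx ↦ sum_sum_thresholdSign_mul_le hd hq G_subset (G_subset hx)
  have card_S_pos : 0 < #S := card_wtStrings_four_mul_pos q
  rcases (#G).eq_zero_or_pos with h | card_G_pos
  · rw [h, Nat.cast_zero]
    positivity
  · have cancelled : (1 / 25 : ℝ) * #G ≤ 3 / 100 * #G +
        2 * 2 ^ (4 * q) * Real.exp (-((10⁻¹ ^ 9) ^ 2 / 2 * (4 * q))) := by
      refine le_of_mul_le_mul_left ?_ (show 0 < (#S : ℝ) ^ 2 * #G by positivity)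
      linarith
    linarith

end Concentration

section ExponentialMoment

section Generic

variable {X : Type*} {S : Finset X} {u : X → ℝ} {l : ℝ}

lemma sum_exp_mul_le_of_sum_le (hu₀ : ∀ x ∈ S, 0 ≤ u x) (hu₁ : ∀ x ∈ S, u x ≤ 1)
    (hsum : 2 * ∑ x ∈ S, u x ≤ #S) (hl₀ : 0 ≤ l) (hl₁ : l ≤ 1 / 10) :
    ∑ x ∈ S, Real.exp (l * u x) ≤ #S * Real.exp (31 / 50 * l) := by
  have pointwise (x) (hx : x ∈ S) : Real.exp (l * u x) ≤ 1 + 11 / 10 * l * u x := by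
    have lu_nonneg : 0 ≤ l * u x := mul_nonneg hl₀ (hu₀ x hx)
    have lu_le : l * u x ≤ 1 / 10 := by nlinarith [hu₁ x hx]
    have taylor := Real.abs_exp_sub_one_sub_id_le (x := l * u x)
      (abs_le.2 ⟨by linarith, by linarith⟩)
    nlinarith [(abs_le.1 taylor).2]
  calc ∑ x ∈ S, Real.exp (l * u x) ≤ ∑ x ∈ S, (1 + 11 / 10 * l * u x) := sum_le_sum pointwise
    _ = #S + 11 / 10 * l * ∑ x ∈ S, u x := by
      rw [sum_add_distrib, sum_const, nsmul_one, mul_sum]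
    _ ≤ #S + 11 / 10 * l * (#S / 2) := by gcongr; linarith
    _ = #S * (1 + 11 / 20 * l) := by ring
    _ ≤ #S * Real.exp (31 / 50 * l) := by
      gcongr
      linarith [Real.add_one_le_exp (31 / 50 * l)]

lemma sum_exp_mul_le_of_card_filter_lt_le {θ δ D : ℝ} (hu : ∀ x ∈ S, u x ≤ 1) (hl : 0 ≤ l)
    (hθ : 0 ≤ θ) (htail : #{x ∈ S | θ < u x} ≤ D * Real.exp (-l) * #S)
    (hD : 0 ≤ D) (hlarge : 1 + D ≤ Real.exp (δ * l)) :
    ∑ x ∈ S, Real.exp (l * u x) ≤ #S * Real.exp ((θ + δ) * l) := by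
  have pointwise (x) (hx : x ∈ S) : Real.exp (l * u x) ≤
      Real.exp (θ * l) + Real.exp l * if θ < u x then 1 else 0 := by
    split_ifs with h
    · have : Real.exp (l * u x) ≤ Real.exp l :=
        Real.exp_le_exp.2 (mul_le_of_le_one_right hl (hu x hx))
      linarith [Real.exp_pos (θ * l)]
    · rw [mul_zero, add_zero, mul_comm θ]
      gcongr
      exact not_lt.1 h
  calc ∑ x ∈ S, Real.exp (l * u x)
      ≤ #S * Real.exp (θ * l) + Real.exp l * #{x ∈ S | θ < u x} := by
        refine (sum_le_sum pointwise).trans_eq ?_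
        rw [sum_add_distrib, sum_const, nsmul_eq_mul, ← mul_sum, sum_boole]
    _ ≤ #S * Real.exp (θ * l) + Real.exp l * (D * Real.exp (-l) * #S) := by gcongr
    _ = #S * (Real.exp (θ * l) + D) := by
        rw [Real.exp_neg]
        field_simp
    _ ≤ #S * (Real.exp (θ * l) * Real.exp (δ * l)) := by
        gcongr
        nlinarith [Real.one_le_exp (mul_nonneg hθ hl)]
    _ = #S * Real.exp ((θ + δ) * l) := by rw [← Real.exp_add, add_mul]

end Generic

lemma card_filter_lt_correctCount_div_le {q d : ℕ} (hd : 0 < d) (hq : 10 ^ 6 * d ^ 2 ≤ 4 * q)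
    (b : (Fin (4 * q) → Bool) → Bool) {a : ℝ} (ha : 4 * a = (10⁻¹ ^ 9) ^ 2) :
    (#{x ∈ wtStrings (4 * q) (2 * q) | 3 / 5 <
      (correctCount (4 * q) (2 * q) (2 * d) b x : ℝ) / #(wtStrings (4 * q) (2 * q))} : ℝ) ≤
      200 / a * Real.exp (-(a * (4 * q))) * #(wtStrings (4 * q) (2 * q)) := by
  have a_pos : 0 < a := by linarith [show (0 : ℝ) < (10⁻¹ ^ 9) ^ 2 by positivity]
  have q_pos : 0 < q := by nlinarith [Nat.one_le_pow 2 d hd]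
  set S := wtStrings (4 * q) (2 * q)
  set E := Real.exp (-(a * (4 * q)))
  have card_S_pos : 0 < (#S : ℝ) := Nat.cast_pos.2 (card_wtStrings_four_mul_pos q)
  have two_pow_le : (2 : ℝ) ^ (4 * q) ≤ 4 * q * #S := by
    have h := Nat.four_pow_le_two_mul_self_mul_centralBinom (2 * q) (by lia)
    rw [show 4 = 2 ^ 2 from rfl, ← pow_mul, ← card_wtStrings_four_mul, ← mul_assoc,
      show 2 * 2 = 4 from rfl] at h
    exact_mod_cast h
  have mul_exp_le : 4 * q * E ≤ 1 / a := by
    rw [le_div_iff₀ a_pos]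
    calc 4 * q * E * a = a * (4 * q) * E := by ring
      _ ≤ Real.exp (a * (4 * q)) * E := by gcongr; linarith [Real.add_one_le_exp (a * (4 * q))]
      _ = 1 := by rw [← Real.exp_add, add_neg_cancel, Real.exp_zero]
  calc _ ≤ 200 * 2 ^ (4 * q) * Real.exp (-((10⁻¹ ^ 9) ^ 2 / 2 * (4 * q))) := by
        simp only [lt_div_iff₀ card_S_pos]
        exact card_filter_lt_correctCount_le hd hq b
    _ = 200 * 2 ^ (4 * q) * (E * E) := by
        rw [← Real.exp_add, ← ha]
        ring_nf
    _ ≤ 200 * (4 * q * #S) * (E * E) := by gcongr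
    _ = 200 * (4 * q * E) * E * #S := by ring
    _ ≤ 200 * (1 / a) * E * #S := by gcongr
    _ = 200 / a * E * #S := by ring

lemma exists_exponential_moment_bound :
    ∃ c : ℝ, 0 < c ∧ ∀ q d : ℕ, 0 < d → 10 ^ 6 * d ^ 2 ≤ 4 * q →
      ∃ l, 0 < l ∧ c * (4 * q) ≤ l ∧ ∀ b : (Fin (4 * q) → Bool) → Bool,
        ∑ x ∈ wtStrings (4 * q) (2 * q), Real.exp (l *
          (correctCount (4 * q) (2 * q) (2 * d) b x / #(wtStrings (4 * q) (2 * q)))) ≤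
        #(wtStrings (4 * q) (2 * q)) * Real.exp (31 / 50 * l) := by
  obtain ⟨a, ha⟩ : ∃ a : ℝ, 4 * a = (10⁻¹ ^ 9) ^ 2 := ⟨(10⁻¹ ^ 9) ^ 2 / 4, by ring⟩
  have a_pos : 0 < a := by linarith [show (0 : ℝ) < (10⁻¹ ^ 9) ^ 2 by positivity]
  have log_pos : 0 < Real.log (1 + 200 / a) :=
    Real.log_pos (lt_add_of_pos_right 1 (by positivity))
  refine ⟨min a (a / (500 * Real.log (1 + 200 / a))), by positivity, fun q d hd hq ↦ ?_⟩
  set S := wtStrings (4 * q) (2 * q)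
  have card_S_pos : 0 < (#S : ℝ) := Nat.cast_pos.2 (card_wtStrings_four_mul_pos q)
  have count_le_one (b x) : (correctCount (4 * q) (2 * q) (2 * d) b x : ℝ) / #S ≤ 1 :=
    div_le_one_of_le₀ (mod_cast correctCount_le_card x) (by positivity)
  have q_pos : 0 < (q : ℝ) := by exact_mod_cast (by nlinarith [Nat.one_le_pow 2 d hd] : 0 < q)
  rcases le_total (Real.log (1 + 200 / a)) (1 / 50 * (a * (4 * q))) with h | h
  · refine ⟨a * (4 * q), by positivity, by gcongr; exact min_le_left _ _, fun b ↦ ?_⟩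
    convert sum_exp_mul_le_of_card_filter_lt_le (δ := 1 / 50) (fun x _ ↦ count_le_one b x)
      (by positivity) (by positivity) (card_filter_lt_correctCount_div_le hd hq b ha)
      (by positivity) ?_ using 3
    · ring
    · rwa [← Real.log_le_iff_le_exp (by positivity)]
  · refine ⟨1 / 10, by norm_num, ?_, fun b ↦ ?_⟩
    · calc _ ≤ a / (500 * Real.log (1 + 200 / a)) * (4 * q) := by gcongr; exact min_le_right _ _
        _ ≤ 1 / 10 := by
          rw [div_mul_eq_mul_div, div_le_iff₀ (by positivity)]
          linarith
    · refine sum_exp_mul_le_of_sum_le (fun x _ ↦ by positivity) (fun x _ ↦ count_le_one b x) ?_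
        (by norm_num) le_rfl
      rw [← sum_div, ← mul_div_assoc, div_le_iff₀ card_S_pos, ← sq]
      exact two_mul_sum_correctCount_le (by lia) (by positivity)

end ExponentialMoment

section UnionBound

variable {ι X : Type*} [Fintype ι] [DecidableEq ι] {S : Finset X} {l α β : ℝ}

lemma card_mul_exp_le_sum_exp {Y : Type*} {T : Finset Y} (hT : T.Nonempty) {Z : Y → ℝ} {c : ℝ}
    (hZ : c * #T ≤ ∑ y ∈ T, Z y) : #T * Real.exp c ≤ ∑ y ∈ T, Real.exp (Z y) := by
  have card_pos : 0 < (#T : ℝ) := Nat.cast_pos.2 hT.card_pos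
  have jensen := convexOn_exp.map_sum_le (t := T) (w := fun _ ↦ (#T : ℝ)⁻¹) (p := Z)
    (fun _ _ ↦ by positivity) (by simp [card_pos.ne']) fun _ _ ↦ Set.mem_univ _
  simp only [smul_eq_mul, ← mul_sum] at jensen
  rw [← le_inv_mul_iff₀ card_pos]
  refine le_trans ?_ jensen
  gcongr
  rwa [le_inv_mul_iff₀ card_pos, mul_comm]

/- A message that depends on all coordinates is replaced by the worst fixed message, for which the
scores of the coordinates are independent; the price is a factor `#M` in the exponential moment. -/
lemma mul_card_le_log_card_of_sum_exp_le {M : Type*} [Fintype M] (hS : S.Nonempty) (hl : 0 ≤ l)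
    {score : M → ι → X → ℝ}
    (hscore : ∀ m i, ∑ x ∈ S, Real.exp (l * score m i x) ≤ #S * Real.exp (α * l))
    {msg : (ι → X) → M}
    (hmsg : β * Fintype.card ι * #S ^ Fintype.card ι ≤
      ∑ s ∈ Fintype.piFinset fun _ ↦ S, ∑ i, score (msg s) i (s i)) :
    (β - α) * l * Fintype.card ι ≤ Real.log (Fintype.card M) := by
  set n := Fintype.card ι
  set T := Fintype.piFinset fun _ : ι ↦ S
  have card_T : (#T : ℝ) = #S ^ n := by simp [T, n, Fintype.card_piFinset]
  have fixed_message (m : M) : ∑ s ∈ T, Real.exp (l * ∑ i, score m i (s i)) ≤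
      (#S * Real.exp (α * l)) ^ n := by
    simp only [mul_sum, Real.exp_sum]
    rw [← prod_univ_sum (fun _ ↦ S) fun i x ↦ Real.exp (l * score m i x)]
    exact (prod_le_prod (fun _ _ ↦ by positivity) fun i _ ↦ hscore m i).trans_eq (by simp [n])
  have exp_moment : #S ^ n * Real.exp (l * (β * n)) ≤
      Fintype.card M * (#S * Real.exp (α * l)) ^ n := by
    calc #S ^ n * Real.exp (l * (β * n))
        ≤ ∑ s ∈ T, Real.exp (l * ∑ i, score (msg s) i (s i)) := by
          rw [← card_T]
          refine card_mul_exp_le_sum_exp (Fintype.piFinset_nonempty.2 fun _ ↦ hS) ?_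
          rw [← mul_sum, mul_assoc, card_T]
          gcongr
      _ ≤ ∑ s ∈ T, ∑ m, Real.exp (l * ∑ i, score m i (s i)) := by
          gcongr with s
          exact single_le_sum (f := fun m ↦ Real.exp (l * ∑ i, score m i (s i)))
            (fun _ _ ↦ by positivity) (mem_univ (msg s))
      _ ≤ ∑ _ : M, (#S * Real.exp (α * l)) ^ n := by
          rw [sum_comm]
          exact sum_le_sum fun m _ ↦ fixed_message m
      _ = Fintype.card M * (#S * Real.exp (α * l)) ^ n := by
          rw [sum_const, nsmul_eq_mul, card_univ]
  rw [Real.le_log_iff_exp_le]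
  · refine le_of_mul_le_mul_left ?_ (show 0 < (#S * Real.exp (α * l)) ^ n by positivity)
    refine le_of_eq_of_le ?_ (exp_moment.trans_eq (mul_comm _ _))
    rw [mul_pow, ← Real.exp_nat_mul, mul_assoc, ← Real.exp_add]
    ring_nf
  · have : Nonempty M := ⟨msg fun _ ↦ hS.choose⟩
    exact_mod_cast Fintype.card_pos

end UnionBound

section SuccessProbability

variable {k w d N : ℕ}

lemma mem_farPairs {s t : Fin k → Bool} :
    (s, t) ∈ farPairs k w d ↔
      s ∈ wtStrings k w ∧ t ∈ wtStrings k w ∧ w + d ≤ hamDist s t := by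
  simp [farPairs, wtStrings]

lemma mem_closePairs {s t : Fin k → Bool} :
    (s, t) ∈ closePairs k w d ↔
      s ∈ wtStrings k w ∧ t ∈ wtStrings k w ∧ hamDist s t + d ≤ w := by
  simp [closePairs, wtStrings]

lemma add_le_hamDist_iff (hk : k = 2 * w) {s t : Fin k → Bool} :
    w + d ≤ hamDist s t ↔ signInner s t ≤ -(2 * d) := by
  have k_eq : (k : ℝ) = 2 * w := mod_cast hk
  rw [signInner_eq_sub_hamDist, k_eq, ← Nat.cast_le (α := ℝ), Nat.cast_add]
  constructor <;> intro h <;> linarith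

lemma hamDist_add_le_iff (hk : k = 2 * w) {s t : Fin k → Bool} :
    hamDist s t + d ≤ w ↔ 2 * d ≤ signInner s t := by
  have k_eq : (k : ℝ) = 2 * w := mod_cast hk
  rw [signInner_eq_sub_hamDist, k_eq, ← Nat.cast_le (α := ℝ), Nat.cast_add]
  constructor <;> intro h <;> linarith

lemma thresholdSign_eq_bitSign_iff (hk : k = 2 * w) (hd : 0 < d) {s t : Fin k → Bool} {b : Bool} :
    thresholdSign (2 * d) (signInner s t) = bitSign b ↔
      (w + d ≤ hamDist s t ∨ hamDist s t + d ≤ w) ∧ b = decide (w + d ≤ hamDist s t) := by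
  have d_pos : (0 : ℝ) < d := Nat.cast_pos.2 hd
  simp only [add_le_hamDist_iff hk, hamDist_add_le_iff hk]
  unfold thresholdSign bitSign
  rcases le_or_gt (2 * d : ℝ) (signInner s t) with hclose | hclose
  · have hfar : ¬signInner s t ≤ -(2 * d) := by linarith
    cases b <;> norm_num [hclose, hfar]
  · by_cases hfar : signInner s t ≤ -(2 * d) <;> cases b <;> norm_num [hclose.not_ge, hfar]

lemma card_closePairs (hk : k = 2 * w) : #(closePairs k w d) = #(farPairs k w d) := by
  refine card_equiv ((Equiv.arrowCongr (Equiv.refl _) Equiv.boolNot).prodCongr (Equiv.refl _)) ?_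
  rintro ⟨s, t⟩
  have h : Equiv.arrowCongr (Equiv.refl _) Equiv.boolNot s = fun j ↦ !s j := rfl
  simp [mem_closePairs, mem_farPairs, hamDist_add_le_iff hk, add_le_hamDist_iff hk, h,
    signInner_not_left, mem_wtStrings_of_eq_two_mul hk, bitSign_not]

lemma le_two_mul_card_farPairs {q : ℕ} (hd : 0 < d) (hq : 10 ^ 6 * d ^ 2 ≤ 4 * q) :
    (99 / 100 : ℝ) * (#(wtStrings (4 * q) (2 * q)) : ℝ) ^ 2 ≤
      2 * #(farPairs (4 * q) (2 * q) d) := by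
  have hk : 4 * q = 2 * (2 * q) := by lia
  set S := wtStrings (4 * q) (2 * q)
  set near := {p ∈ S ×ˢ S | |signInner p.1 p.2| < 2 * d}
  have cover : S ×ˢ S ⊆ farPairs (4 * q) (2 * q) d ∪ closePairs (4 * q) (2 * q) d ∪ near := by
    rintro ⟨s, t⟩ hst
    rw [mem_union, mem_union, mem_farPairs, mem_closePairs, mem_filter, add_le_hamDist_iff hk,
      hamDist_add_le_iff hk, abs_lt]
    obtain ⟨hs, ht⟩ := mem_product.1 hst
    grind
  have card_near : (#near : ℝ) ≤ 1 / 100 * (#S : ℝ) ^ 2 := by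
    calc (#near : ℝ) = ∑ s ∈ S, (#{t ∈ S | |signInner s t| < 2 * d} : ℝ) := by
          simp only [near, ← sum_boole, sum_product]
      _ ≤ ∑ _ ∈ S, (1 / 100 : ℝ) * #S := by
          refine sum_le_sum fun _ hs ↦ le_trans ?_ (card_filter_abs_signInner_lt_add_le hd hq hs)
          gcongr
          exact le_add_of_nonneg_right (by positivity)
      _ = 1 / 100 * (#S : ℝ) ^ 2 := by
          rw [sum_const, nsmul_eq_mul]
          ring
  have card_le : (#S : ℝ) * #S ≤ #(farPairs (4 * q) (2 * q) d) +
      #(closePairs (4 * q) (2 * q) d) + #near := by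
    rw [← Nat.cast_mul, ← card_product]
    exact_mod_cast (card_le_card cover).trans
      ((card_union_le _ _).trans (Nat.add_le_add_right (card_union_le _ _) _))
  rw [card_closePairs hk] at card_le
  linarith

/-- The probability that a protocol without shared randomness, in which Alice sends the message
`A s` and Bob then answers `B (A s) i t`, decides correctly whether the distance of `s i` and `t`
is at least `w + d`, for inputs distributed according to `nuDist`. -/
noncomputable def successProb {Msg : Type*} (k w d N : ℕ) (A : (Fin N → Fin k → Bool) → Msg)
    (B : Msg → Fin N → (Fin k → Bool) → Bool) : ℝ :=
  ∑ s, ∑ i, ∑ t, nuDist k w d N s i t *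
    if B (A s) i t = decide (w + d ≤ hamDist (s i) t) then 1 else 0

lemma nuDist_eq (hk : k = 2 * w) (hd : 0 < d) (s : Fin N → Fin k → Bool) (i : Fin N)
    (t : Fin k → Bool) :
    nuDist k w d N s i t =
      1 / N * (1 / (2 * #(farPairs k w d))) * (1 / #(wtStrings k w)) ^ (N - 1) *
        if s ∈ Fintype.piFinset (fun _ ↦ wtStrings k w) ∧ t ∈ wtStrings k w ∧
          (w + d ≤ hamDist (s i) t ∨ hamDist (s i) t + d ≤ w) then 1 else 0 := by
  have pair_eq : 1 / 2 * (if (s i, t) ∈ farPairs k w d then (1 : ℝ) else 0) / #(farPairs k w d) +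
      1 / 2 * (if (s i, t) ∈ closePairs k w d then (1 : ℝ) else 0) / #(closePairs k w d) =
        1 / (2 * #(farPairs k w d)) * if s i ∈ wtStrings k w ∧ t ∈ wtStrings k w ∧
          (w + d ≤ hamDist (s i) t ∨ hamDist (s i) t + d ≤ w) then 1 else 0 := by
    simp only [mem_farPairs, mem_closePairs, card_closePairs hk]
    by_cases hfar : w + d ≤ hamDist (s i) t
    · have hclose : ¬hamDist (s i) t + d ≤ w := by lia
      simp only [hfar, hclose, and_false, true_or, if_false]
      ring
    · simp only [hfar, and_false, false_or, if_false]
      ring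
  have prod_eq : ∏ j with j ≠ i, (if hamWt (s j) = w then (1 : ℝ) / #(wtStrings k w) else 0) =
      if ∀ j ≠ i, s j ∈ wtStrings k w then (1 / (#(wtStrings k w) : ℝ)) ^ (N - 1) else 0 := by
    rw [prod_ite_zero, prod_const, filter_ne', card_erase_of_mem (mem_univ i), card_univ,
      Fintype.card_fin]
    simp [wtStrings]
  have mem_pi : s ∈ Fintype.piFinset (fun _ ↦ wtStrings k w) ↔
      (∀ j ≠ i, s j ∈ wtStrings k w) ∧ s i ∈ wtStrings k w := by
    grind
  simp only [nuDist, pair_eq, prod_eq, mem_pi, and_assoc]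
  rw [ite_and (∀ j ≠ i, s j ∈ wtStrings k w)]
  split_ifs <;> ring

lemma successProb_eq {Msg : Type*} (hk : k = 2 * w) (hd : 0 < d)
    (A : (Fin N → Fin k → Bool) → Msg) (B : Msg → Fin N → (Fin k → Bool) → Bool) :
    successProb k w d N A B =
      1 / N * (1 / (2 * #(farPairs k w d))) * (1 / #(wtStrings k w)) ^ (N - 1) *
        ∑ s ∈ Fintype.piFinset fun _ ↦ wtStrings k w, ∑ i,
          (correctCount k w (2 * d) (B (A s) i) (s i) : ℝ) := by
  have pointwise (s : Fin N → Fin k → Bool) (i : Fin N) (t : Fin k → Bool) :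
      nuDist k w d N s i t * (if B (A s) i t = decide (w + d ≤ hamDist (s i) t) then 1 else 0) =
        1 / N * (1 / (2 * #(farPairs k w d))) * (1 / #(wtStrings k w)) ^ (N - 1) *
          if s ∈ Fintype.piFinset (fun _ ↦ wtStrings k w) then if t ∈ wtStrings k w then
            if thresholdSign (2 * d) (signInner (s i) t) = bitSign (B (A s) i t) then 1 else 0
            else 0 else 0 := by
    simp only [nuDist_eq hk hd, mul_assoc, ite_zero_mul_ite_zero, one_mul, ← ite_and, and_assoc,
      thresholdSign_eq_bitSign_iff hk hd]
  simp only [successProb, pointwise, ← mul_sum, sum_ite_irrel, sum_const_zero,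
    sum_ite_mem, univ_inter, sum_boole, correctCount]

lemma mul_le_sum_correctCount_div_of_le_successProb {Msg : Type*} {q : ℕ} {p : ℝ} (hp : 0 ≤ p)
    (hd : 0 < d) (hq : 10 ^ 6 * d ^ 2 ≤ 4 * q) {A : (Fin N → Fin (4 * q) → Bool) → Msg}
    {B : Msg → Fin N → (Fin (4 * q) → Bool) → Bool}
    (hAB : p ≤ successProb (4 * q) (2 * q) d N A B) :
    99 / 100 * p * N * #(wtStrings (4 * q) (2 * q)) ^ N ≤
      ∑ s ∈ Fintype.piFinset fun _ ↦ wtStrings (4 * q) (2 * q), ∑ i,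
        (correctCount (4 * q) (2 * q) (2 * d) (B (A s) i) (s i) : ℝ) /
          #(wtStrings (4 * q) (2 * q)) := by
  rcases N.eq_zero_or_pos with rfl | hN
  · simp
  have card_S_pos : 0 < (#(wtStrings (4 * q) (2 * q)) : ℝ) :=
    Nat.cast_pos.2 (card_wtStrings_four_mul_pos q)
  have card_far := le_two_mul_card_farPairs hd hq
  rw [successProb_eq (by lia) hd] at hAB
  simp only [← sum_div]
  set S := wtStrings (4 * q) (2 * q)
  set total := ∑ s ∈ Fintype.piFinset fun _ ↦ S, ∑ i,
    (correctCount (4 * q) (2 * q) (2 * d) (B (A s) i) (s i) : ℝ)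
  have card_far_pos : 0 < (#(farPairs (4 * q) (2 * q) d) : ℝ) := by
    linarith [show 0 < (#S : ℝ) ^ 2 by positivity]
  rw [le_div_iff₀ card_S_pos]
  calc 99 / 100 * p * N * #S ^ N * #S
      = p * N * #S ^ (N - 1) * (99 / 100 * #S ^ 2) := by
        obtain ⟨n, rfl⟩ := Nat.exists_eq_add_of_lt hN
        simp only [zero_add, Nat.add_sub_cancel]
        ring
    _ ≤ p * N * #S ^ (N - 1) * (2 * #(farPairs (4 * q) (2 * q) d)) := by gcongr
    _ ≤ 1 / N * (1 / (2 * #(farPairs (4 * q) (2 * q) d))) * (1 / #S) ^ (N - 1) * total * N *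
          #S ^ (N - 1) * (2 * #(farPairs (4 * q) (2 * q) d)) := by gcongr
    _ = total := by
        rw [one_div_pow]
        field_simp

end SuccessProbability

lemma exists_le_of_le_sum_mul {R : Type*} [Fintype R] {ρ f : R → ℝ} {c : ℝ} (hρ : ∀ r, 0 ≤ ρ r)
    (hsum : ∑ r, ρ r = 1) (hc : c ≤ ∑ r, ρ r * f r) : ∃ r, c ≤ f r := by
  have : Nonempty R := by
    by_contra! h
    simp at hsum
  obtain ⟨r, hr⟩ := Finite.exists_max f
  refine ⟨r, hc.trans ?_⟩
  calc ∑ r', ρ r' * f r' ≤ ∑ r', ρ r' * f r := by gcongr with r'; exacts [hρ r', hr r']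
    _ = f r := by rw [← sum_mul, hsum, one_mul]

theorem stmt_2_general :
    ∃ c : ℝ, 0 < c ∧
      ∀ q d N : ℕ, 0 < d → 10 ^ 6 * d ^ 2 ≤ 4 * q →
        ∀ {R Msg : Type*} [Fintype R] [Fintype Msg] (ρ : R → ℝ),
          (∀ r, 0 ≤ ρ r) → ∑ r, ρ r = 1 →
          ∀ (A : (Fin N → Fin (4 * q) → Bool) → R → Msg)
            (B : Msg → Fin N → (Fin (4 * q) → Bool) → R → Bool),
            2 / 3 ≤ ∑ r, ρ r *
              successProb (4 * q) (2 * q) d N (fun s ↦ A s r) (fun msg i t ↦ B msg i t r) →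
            c * (4 * q) * N ≤ Real.log (Fintype.card Msg) := by
  obtain ⟨c, c_pos, exp_moment⟩ := exists_exponential_moment_bound
  refine ⟨c / 25, by positivity, fun q d N hd hq R Msg _ _ ρ hρ hsum A B hAB ↦ ?_⟩
  obtain ⟨l, l_pos, le_l, hl⟩ := exp_moment q d hd hq
  obtain ⟨r, hr⟩ := exists_le_of_le_sum_mul hρ hsum hAB
  have correct := mul_le_sum_correctCount_div_of_le_successProb (by norm_num) hd hq hr
  have le_log := mul_card_le_log_card_of_sum_exp_le
    (card_pos.1 (card_wtStrings_four_mul_pos q)) l_pos.le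
    (score := fun msg i x ↦ correctCount (4 * q) (2 * q) (2 * d) (fun t ↦ B msg i t r) x /
      #(wtStrings (4 * q) (2 * q)))
    (fun msg i ↦ hl fun t ↦ B msg i t r) (β := 99 / 100 * (2 / 3)) (msg := fun s ↦ A s r)
    (by simpa only [Fintype.card_fin] using correct)
  rw [Fintype.card_fin] at le_log
  exact (mul_le_mul_of_nonneg_right (by linarith) (Nat.cast_nonneg N)).trans le_log

end

theorem stmt_2 :
    ∃ c' : ℝ, 0 < c' ∧
      ∀ (ε : ℝ) (k khalf d N n m : ℕ),
        0 < ε → ε ≤ (1 / 1000 : ℝ) / 10 →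
        (k : ℝ) = 1 / ε ^ 2 → k = 2 * khalf → 0 < khalf →
        (d : ℝ) = (1 / 1000 : ℝ) / ε → 0 < d →
        n = 2 * N → 0 < N →
        ∀ (R : Type) [Fintype R] (ρ : R → ℝ),
          (∀ r, 0 ≤ ρ r) → (∑ r : R, ρ r) = 1 →
          ∀ (A : (Fin N → Fin k → Bool) → R → (Fin m → Bool))
            (B : (Fin m → Bool) → Fin N → (Fin k → Bool) → R → Bool),
            ((2 : ℝ) / 3 ≤
              ∑ r : R, ∑ s : Fin N → Fin k → Bool, ∑ i : Fin N, ∑ t : Fin k → Bool,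
                ρ r * nuDist k khalf d N s i t *
                  (if B (A s r) i t r = decide (khalf + d ≤ hamDist (s i) t)
                    then (1 : ℝ) else 0)) →
            c' * n / ε ^ 2 ≤ (m : ℝ) := by
  obtain ⟨c, c_pos, log_card_ge⟩ := stmt_2_general
  refine ⟨c / 2, by positivity, ?_⟩
  intro ε k khalf d N n m ε_pos _ hk hkhalf _ hdε hd hn _ R _ ρ hρ hsum A B hsucc
  have k_eq : k = 10 ^ 6 * d ^ 2 := by
    rify
    rw [hk, hdε]
    ring
  obtain ⟨q, rfl, rfl⟩ : ∃ q, k = 4 * q ∧ khalf = 2 * q := ⟨250000 * d ^ 2, by lia, by lia⟩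
  have log_ge := log_card_ge q d N hd k_eq.ge ρ hρ hsum A B
    (by simpa only [successProb, Finset.mul_sum, mul_assoc] using hsucc)
  calc c / 2 * n / ε ^ 2 = c * (4 * q : ℕ) * N := by
        rw [hk, hn]
        push_cast
        ring
    _ ≤ Real.log (Fintype.card (Fin m → Bool)) := by exact_mod_cast log_ge
    _ = m * Real.log 2 := by simp
    _ ≤ m := mul_le_of_le_one_right (by positivity) (by linarith [Real.log_two_lt_d9])
end
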